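/- Let Q be a finite acyclic quiver, Q' a full connected Dynkin subquiver of Q, β a positive root of Q', and i a vertex with β(i) = 1. For every m ≥ 0, the ℚ-linear span of all m-fold left-to-right products (f₁(ω_{i,1}) ∈ ℋ_β) * ⋯ * (f_m(ω_{i,1}) ∈ ℋ_β) with f₁,…,f_m ∈ ℚ[x] equals the subspace 𝒜_{β,m} of ℋ_{m·β} consisting of all polynomials that depend only on the variables ω_{i,1},…,ω_{i,m} (such polynomials are necessarily symmetric in ω_{i,1},…,ω_{i,m}). -/

import Mathlib

open MvPolynomial
open scoped Classical

/-- A finite quiver with vertex set `Fin n`: a finite type of arrows together with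
head and tail maps. -/
structure FinQuiver (n : ℕ) where
  Arr : Type
  [fintypeArr : Fintype Arr]
  hd : Arr → Fin n
  tl : Arr → Fin n

attribute [instance] FinQuiver.fintypeArr

variable {n : ℕ}

/-- `Q` is acyclic: there is no oriented cycle, i.e. no path
`a₁, …, a_{k+1}` (with `hd aₘ = tl aₘ₊₁`) whose final head equals its initial tail. -/
def FinQuiver.Acyclic (Q : FinQuiver n) : Prop :=
  ∀ (k : ℕ) (c : Fin (k + 1) → Q.Arr),
    (∀ m : Fin k, Q.hd (c m.castSucc) = Q.tl (c m.succ)) →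
    Q.hd (c (Fin.last k)) ≠ Q.tl (c 0)

/-- The Euler form `χ_Q` of the quiver `Q`. -/
def FinQuiver.euler (Q : FinQuiver n) (α β : Fin n → ℕ) : ℤ :=
  ∑ i : Fin n, (α i : ℤ) * β i - ∑ a : Q.Arr, (α (Q.tl a) : ℤ) * β (Q.hd a)

/-- The opposite antisymmetrization `⟨α,β⟩ = χ_Q(β,α) − χ_Q(α,β)`. -/
def FinQuiver.lam (Q : FinQuiver n) (α β : Fin n → ℕ) : ℤ :=
  Q.euler β α - Q.euler α β

/-- The polynomial ring in the variables `ω_{i,j}`, `i ∈ Q₀`, `j ∈ ℕ` (0-indexed). -/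
abbrev PolyQ (n : ℕ) := MvPolynomial (Fin n × ℕ) ℚ

/-- The permutation of the variables at vertex `i` induced by a permutation of `ℕ`. -/
def vertexPerm (i : Fin n) (σ : Equiv.Perm ℕ) : Fin n × ℕ → Fin n × ℕ :=
  fun p => if p.1 = i then (i, σ p.2) else p

/-- `f` is, for each vertex `i`, symmetric in the variables `ω_{i,0},…,ω_{i,γ i − 1}`. -/
def SymmIn (γ : Fin n → ℕ) (f : PolyQ n) : Prop :=
  ∀ (i : Fin n) (σ : Equiv.Perm ℕ),
    (∀ j : ℕ, σ j ≠ j → j < γ i) → rename (vertexPerm i σ) f = f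

lemma vars_smul_subset (c : ℚ) (f : PolyQ n) : (c • f).vars ⊆ f.vars := by
  rw [MvPolynomial.smul_eq_C_mul]
  refine (MvPolynomial.vars_mul _ _).trans ?_
  simp [MvPolynomial.vars_C]

/-- `ℋ_γ`: polynomials using only the variables `ω_{i,j}`, `j < γ i`, which are
symmetric at each vertex.  A `ℚ`-submodule of `PolyQ n`. -/
noncomputable def Hspace (γ : Fin n → ℕ) : Submodule ℚ (PolyQ n) where
  carrier := {f | (∀ p ∈ f.vars, p.2 < γ p.1) ∧ SymmIn γ f}
  add_mem' := by
    rintro f g ⟨hf1, hf2⟩ ⟨hg1, hg2⟩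
    refine ⟨fun p hp => ?_, fun i σ hσ => ?_⟩
    · rcases Finset.mem_union.mp (MvPolynomial.vars_add_subset f g hp) with h | h
      exacts [hf1 p h, hg1 p h]
    · rw [map_add, hf2 i σ hσ, hg2 i σ hσ]
  zero_mem' := by
    refine ⟨fun p hp => ?_, fun i σ hσ => map_zero _⟩
    simp [MvPolynomial.vars_0] at hp
  smul_mem' := by
    rintro c f ⟨hf1, hf2⟩
    refine ⟨fun p hp => hf1 p (vars_smul_subset c f hp), fun i σ hσ => ?_⟩
    rw [map_smul, hf2 i σ hσ]

/-- Polynomials all of whose variables sit at vertex `i`. -/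
noncomputable def onlyVertex (i : Fin n) : Submodule ℚ (PolyQ n) where
  carrier := {f | ∀ p ∈ f.vars, p.1 = i}
  add_mem' := by
    intro f g hf hg p hp
    rcases Finset.mem_union.mp (MvPolynomial.vars_add_subset f g hp) with h | h
    exacts [hf p h, hg p h]
  zero_mem' := by
    intro p hp
    simp [MvPolynomial.vars_0] at hp
  smul_mem' := by
    intro c f hf p hp
    exact hf p (vars_smul_subset c f hp)

/-- `𝒜_{β,m}`: the subspace of `ℋ_{m·β}` of polynomials depending only on the
variables `ω_{i,0},…,ω_{i,m−1}` at the distinguished vertex `i`. -/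
noncomputable def Aspace (β : Fin n → ℕ) (i : Fin n) (m : ℕ) : Submodule ℚ (PolyQ n) :=
  Hspace (fun v => m * β v) ⊓ onlyVertex i

/-- Substitute for the `j`-th variable at vertex `i` the variable `ω_{i,s}` where `s`
is the `j`-th element of `T i` in increasing order. -/
noncomputable def substAlong (T : Fin n → Finset ℕ) : PolyQ n →ₐ[ℚ] PolyQ n :=
  aeval fun p : Fin n × ℕ => X (p.1, ((T p.1).sort (· ≤ ·)).getD p.2 0)

/-- The index set of the Kontsevich–Soibelman localization sum:
for each vertex, a `γ₁ i`-element subset of `{0,…,γ₁ i + γ₂ i − 1}`. -/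
def shuffles (γ₁ γ₂ : Fin n → ℕ) : Finset (Fin n → Finset ℕ) :=
  Fintype.piFinset fun i => (Finset.range (γ₁ i + γ₂ i)).powerset.filter fun s => s.card = γ₁ i

def shuffleCompl (γ₁ γ₂ : Fin n → ℕ) (S : Fin n → Finset ℕ) : Fin n → Finset ℕ :=
  fun i => Finset.range (γ₁ i + γ₂ i) \ S i

/-- The numerator factor attached to the arrow `a`:
`∏_{j' ∈ S̄_{h a}} ∏_{j ∈ S_{t a}} (ω_{h a, j'} − ω_{t a, j})`. -/
noncomputable def arrowFactor (Q : FinQuiver n) (γ₁ γ₂ : Fin n → ℕ)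
    (S : Fin n → Finset ℕ) (a : Q.Arr) : PolyQ n :=
  ∏ j' ∈ shuffleCompl γ₁ γ₂ S (Q.hd a), ∏ j ∈ S (Q.tl a),
    (X (Q.hd a, j') - X (Q.tl a, j))

noncomputable def interactionNum (Q : FinQuiver n) (γ₁ γ₂ : Fin n → ℕ)
    (S : Fin n → Finset ℕ) : PolyQ n :=
  ∏ a : Q.Arr, arrowFactor Q γ₁ γ₂ S a

noncomputable def interactionDen (γ₁ γ₂ : Fin n → ℕ) (S : Fin n → Finset ℕ) : PolyQ n :=
  ∏ i : Fin n, ∏ j' ∈ shuffleCompl γ₁ γ₂ S i, ∏ j ∈ S i, (X (i, j') - X (i, j))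

/-- The Kontsevich–Soibelman localization sum, an element of the field of rational
functions (the fraction field of `PolyQ n`). -/
noncomputable def cohaMulRat (Q : FinQuiver n) (γ₁ γ₂ : Fin n → ℕ) (f₁ f₂ : PolyQ n) :
    FractionRing (PolyQ n) :=
  ∑ S ∈ shuffles γ₁ γ₂,
    algebraMap (PolyQ n) (FractionRing (PolyQ n))
        (substAlong S f₁ * substAlong (shuffleCompl γ₁ γ₂ S) f₂ * interactionNum Q γ₁ γ₂ S) /
      algebraMap (PolyQ n) (FractionRing (PolyQ n)) (interactionDen γ₁ γ₂ S)

/-- The CoHA product `f₁ * f₂`: the unique polynomial representing the localization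
sum (and `0` if the sum were not a polynomial, which never happens). -/
noncomputable def cohaMul (Q : FinQuiver n) (γ₁ γ₂ : Fin n → ℕ) (f₁ f₂ : PolyQ n) : PolyQ n :=
  if h : ∃ P : PolyQ n,
      algebraMap (PolyQ n) (FractionRing (PolyQ n)) P = cohaMulRat Q γ₁ γ₂ f₁ f₂ then
    h.choose
  else 0

/-- Iterated, left-to-right, CoHA product of a list of dimension-vector/polynomial pairs.
Returns the total dimension vector together with the product. -/
noncomputable def cohaProd (Q : FinQuiver n) :
    List ((Fin n → ℕ) × PolyQ n) → (Fin n → ℕ) × PolyQ n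
  | [] => (fun _ => 0, 1)
  | x :: xs => xs.foldl (fun acc y => (acc.1 + y.1, cohaMul Q acc.1 y.1 acc.2 y.2)) x

/-- Left-to-right CoHA product `f 0 * f 1 * ⋯ * f (r−1)` with `f u ∈ ℋ_{γ u}`. -/
noncomputable def cohaProdFin (Q : FinQuiver n) {r : ℕ} (γ : Fin r → Fin n → ℕ)
    (f : Fin r → PolyQ n) : PolyQ n :=
  (cohaProd Q (List.ofFn fun u => (γ u, f u))).2

/-- The quiver with one vertex and no arrows. -/
def A1 : FinQuiver 1 := { Arr := Empty, hd := Empty.elim, tl := Empty.elim }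

/-- `ψ_p = x₁ ^ p ∈ ℋ₁(A₁)`. -/
noncomputable def psi (p : ℕ) : PolyQ 1 := X ((0 : Fin 1), 0) ^ p

def oneDim : Fin 1 → ℕ := fun _ => 1

/-- The simple dimension vector `e_i`. -/
def simpleDim (i : Fin n) : Fin n → ℕ := fun v => if v = i then 1 else 0

/-- A subquiver of `Q`. -/
structure Subquiver (Q : FinQuiver n) where
  verts : Finset (Fin n)
  arrows : Finset Q.Arr
  hd_mem : ∀ a ∈ arrows, Q.hd a ∈ verts
  tl_mem : ∀ a ∈ arrows, Q.tl a ∈ verts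

def Subquiver.Full {Q : FinQuiver n} (Q' : Subquiver Q) : Prop :=
  ∀ a : Q.Arr, Q.hd a ∈ Q'.verts → Q.tl a ∈ Q'.verts → a ∈ Q'.arrows

/-- Adjacency in the underlying undirected graph of a subquiver. -/
def Subquiver.Adj {Q : FinQuiver n} (Q' : Subquiver Q) (x y : Fin n) : Prop :=
  ∃ a ∈ Q'.arrows, (Q.hd a = x ∧ Q.tl a = y) ∨ (Q.hd a = y ∧ Q.tl a = x)

def Subquiver.Connected {Q : FinQuiver n} (Q' : Subquiver Q) : Prop :=
  ∀ x ∈ Q'.verts, ∀ y ∈ Q'.verts, Relation.ReflTransGen Q'.Adj x y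

/-- The Euler form of the subquiver `Q'` (on `ℤ`-valued vectors). -/
def Subquiver.eulerZ {Q : FinQuiver n} (Q' : Subquiver Q) (α β : Fin n → ℤ) : ℤ :=
  ∑ i ∈ Q'.verts, α i * β i - ∑ a ∈ Q'.arrows, α (Q.tl a) * β (Q.hd a)

/-- Positive definiteness of the Tits form of `Q'` on vectors supported on `Q'`. -/
def Subquiver.PosDefTits {Q : FinQuiver n} (Q' : Subquiver Q) : Prop :=
  ∀ β : Fin n → ℤ, (∀ i, i ∉ Q'.verts → β i = 0) → β ≠ 0 → 0 < Q'.eulerZ β β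

/-- A connected full subquiver with positive definite Tits form. -/
def Subquiver.IsDynkin {Q : FinQuiver n} (Q' : Subquiver Q) : Prop :=
  Q'.Connected ∧ Q'.Full ∧ Q'.PosDefTits

/-- A positive root of `Q'`: a nonzero dimension vector supported on `Q'` with
Tits form equal to `1`. -/
def Subquiver.IsPosRoot {Q : FinQuiver n} (Q' : Subquiver Q) (β : Fin n → ℕ) : Prop :=
  (∀ i, i ∉ Q'.verts → β i = 0) ∧ β ≠ 0 ∧
    Q'.eulerZ (fun i => (β i : ℤ)) (fun i => (β i : ℤ)) = 1

/-- A subquiver regarded as a quiver in its own right (on the ambient vertex set). -/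
def Subquiver.toQuiver {Q : FinQuiver n} (Q' : Subquiver Q) : FinQuiver n :=
  { Arr := {a : Q.Arr // a ∈ Q'.arrows}, hd := fun a => Q.hd a.1, tl := fun a => Q.tl a.1 }

/-- An (ordered list) subquiver partition `𝒬• = (Q¹,…,Q^ℓ)`: nonempty connected
subquivers whose vertex sets partition `Q₀`. -/
structure SubqPartition (Q : FinQuiver n) (ℓ : ℕ) where
  part : Fin ℓ → Subquiver Q
  nonempty' : ∀ j, (part j).verts.Nonempty
  connected' : ∀ j, (part j).Connected
  cover : ∀ i : Fin n, ∃! j, i ∈ (part j).verts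

/-- The set `𝒬•₁` of arrows belonging to one of the parts. -/
noncomputable def SubqPartition.arrs {Q : FinQuiver n} {ℓ : ℕ} (P : SubqPartition Q ℓ) : Finset Q.Arr :=
  Finset.univ.biUnion fun j => (P.part j).arrows

/-- The partition is admissible and ordered: every arrow not inside a part goes from a
later part to an earlier part (head before tail). -/
def SubqPartition.Ordered {Q : FinQuiver n} {ℓ : ℕ} (P : SubqPartition Q ℓ) : Prop :=
  ∀ a : Q.Arr, a ∉ P.arrs → ∀ i j : Fin ℓ,
    Q.hd a ∈ (P.part i).verts → Q.tl a ∈ (P.part j).verts → i < j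

/-- Every part is a Dynkin subquiver. -/
def SubqPartition.Dynkin {Q : FinQuiver n} {ℓ : ℕ} (P : SubqPartition Q ℓ) : Prop :=
  ∀ j, (P.part j).IsDynkin

/-- `β : Fin r → (Fin n → ℕ)` is a Reineke-ordered enumeration of `Φ₊(𝒬•)`, with
`blk u` the part to which `β u` belongs: block-monotone, enumerating all positive roots
without repetition, and within each block `u < v → ⟨β u, β v⟩ ≥ 0`. -/
def IsReinekeOrder {Q : FinQuiver n} {ℓ : ℕ} (P : SubqPartition Q ℓ) {r : ℕ}
    (β : Fin r → Fin n → ℕ) (blk : Fin r → Fin ℓ) : Prop :=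
  Monotone blk ∧
  (∀ u, (P.part (blk u)).IsPosRoot (β u)) ∧
  Function.Injective β ∧
  (∀ j (b : Fin n → ℕ), (P.part j).IsPosRoot b → ∃ u, β u = b) ∧
  (∀ u v : Fin r, u < v → blk u = blk v → 0 ≤ Q.lam (β u) (β v))

/-!
In the `(k + 1)`-st product step, group the localization sum by the index `l` that the shuffle
splits off at the vertex `i`, where `β i = 1`. The partial sum over the other vertices has an
antisymmetric numerator over a product of Vandermonde determinants, so it is a polynomial; its
degree is `0` because `χ(kβ, β) = k`, so it is a constant. To find the constant, put
`ω_{v,j} = (j mod (k + 1)) + ε j` and let `ε → 0`. If `e_b` counts the split-off indices congruent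
to `b`, the term of a shuffle vanishes to order at least `∑ q(e_b) - 1`, where `q` is the Tits
form. As `∑ e_b = β`, this is positive unless all split-off indices are congruent to `l`, and the
one remaining term tends to `1`; so the constant is `1`.

Hence products are computed as on the quiver with the single vertex `i` and no arrows. There
`f₁ * ⋯ * f_m` is the alternant `det (f_u(ω_{i,j}))` divided by the Vandermonde determinant, and
these quotients span the symmetric polynomials: if `g` is symmetric, antisymmetrizing the
monomials of `Δ g`, with `Δ` the Vandermonde determinant, writes `m! Δ g` as a combination of
alternants.
-/

section LinearFactors

variable {σ R : Type*} [CommRing R]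

theorem rename_comp_X {τ : Type*} (e : σ → τ) : rename e ∘ X = (X ∘ e : σ → MvPolynomial τ R) :=
  funext fun j => rename_X e j

theorem X_sub_X_dvd_iff [DecidableEq σ] {p q : σ} {f : MvPolynomial σ R} :
    X p - X q ∣ f ↔ rename (Function.update id p q) f = 0 := by
  set I : Ideal (MvPolynomial σ R) := Ideal.span {X p - X q}
  have mk_rename : (Ideal.Quotient.mkₐ R I).comp (rename (Function.update id p q)) =
      Ideal.Quotient.mkₐ R I := by
    ext r
    rcases eq_or_ne r p with rfl | hr
    · simpa [Ideal.Quotient.eq] using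
        (neg_sub (X r) (X q : MvPolynomial σ R)) ▸ I.neg_mem (Ideal.mem_span_singleton_self _)
    · simp [hr]
  constructor
  · rintro ⟨g, rfl⟩
    rcases eq_or_ne q p with rfl | h <;> simp [*]
  · intro hf
    have mk_eq_zero := DFunLike.congr_fun mk_rename f
    rw [AlgHom.comp_apply, hf, map_zero] at mk_eq_zero
    exact Ideal.mem_span_singleton.mp (Ideal.Quotient.eq_zero_iff_mem.mp mk_eq_zero.symm)

theorem X_sub_X_dvd_of_rename_swap_eq_neg [DecidableEq σ] [IsDomain R] [CharZero R]
    {p q : σ} {f : MvPolynomial σ R} (hf : rename (Equiv.swap p q) f = -f) : X p - X q ∣ f := by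
  have update_comp_swap :
      Function.update id p q ∘ Equiv.swap p q = (Function.update id p q : σ → σ) := by
    funext r
    simp only [Function.comp_apply, Function.update_apply, Equiv.swap_apply_def, id]
    split_ifs <;> simp_all
  have neg_eq_self := congrArg (rename (Function.update id p q)) hf
  rw [rename_rename, update_comp_swap, map_neg] at neg_eq_self
  exact X_sub_X_dvd_iff.mpr (self_eq_neg.mp neg_eq_self)

variable [IsDomain R]

theorem prime_X_sub_X {p q : σ} (hpq : p ≠ q) : Prime (X p - X q : MvPolynomial σ R) := by
  refine ⟨sub_ne_zero.mpr (X_injective.ne hpq), fun hu => ?_, fun a b hab => ?_⟩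
  · have image_isUnit := hu.map (rename (Function.update id p q) : MvPolynomial σ R →ₐ[R] _)
    rw [X_sub_X_dvd_iff.mp dvd_rfl] at image_isUnit
    exact not_isUnit_zero image_isUnit
  · rw [X_sub_X_dvd_iff, map_mul, mul_eq_zero] at hab
    exact hab.imp X_sub_X_dvd_iff.mpr X_sub_X_dvd_iff.mpr

theorem isRelPrime_X_sub_X {p q r s : σ} (hpq : p ≠ q) (hrs : r ≠ s) (h : s(p, q) ≠ s(r, s)) :
    IsRelPrime (X p - X q : MvPolynomial σ R) (X r - X s) := by
  rw [(prime_X_sub_X hpq).irreducible.isRelPrime_iff_not_dvd, X_sub_X_dvd_iff, map_sub, rename_X,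
    rename_X, sub_eq_zero, X_injective.eq_iff]
  rw [Ne, Sym2.eq_iff] at h
  simp only [Function.update_apply, id]
  split_ifs <;> grind

theorem prod_X_sub_X_dvd [UniqueFactorizationMonoid R] {ι : Type*} {I : Finset ι} {p q : ι → σ}
    (hpq : ∀ a ∈ I, p a ≠ q a) (hinj : Set.InjOn (fun a => s(p a, q a)) I) {f : MvPolynomial σ R}
    (hf : ∀ a ∈ I, X (p a) - X (q a) ∣ f) : ∏ a ∈ I, (X (p a) - X (q a)) ∣ f :=
  Finset.prod_dvd_of_isRelPrime (fun a ha b hb hab =>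
    isRelPrime_X_sub_X (hpq a ha) (hpq b hb) (hinj.ne ha hb hab)) hf

theorem prod_det_vandermonde_dvd [DecidableEq σ] [UniqueFactorizationMonoid R] [CharZero R]
    {ι : Type*} {s : Finset ι} {N : ι → ℕ} {p : (v : ι) → Fin (N v) → σ}
    (hp : Function.Injective fun a : (v : ι) × Fin (N v) => p a.1 a.2) {f : MvPolynomial σ R}
    (hf : ∀ v ∈ s, ∀ a b, a ≠ b → rename (Equiv.swap (p v a) (p v b)) f = -f) :
    ∏ v ∈ s, (Matrix.vandermonde fun j => (X (p v j) : MvPolynomial σ R)).det ∣ f := by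
  simp only [Matrix.det_vandermonde, Finset.prod_sigma']
  refine prod_X_sub_X_dvd (ι := (v : ι) × (_ : Fin (N v)) × Fin (N v))
    (p := fun t => p t.1 t.2.2) (q := fun t => p t.1 t.2.1) ?_ ?_ ?_
  · rintro ⟨v, a, b⟩ hb h
    have := @hp ⟨v, b⟩ ⟨v, a⟩ h
    simp_all
  · rintro ⟨v, a, b⟩ hb ⟨w, c, d⟩ hd h
    simp only [Finset.coe_sigma, Set.mem_sigma_iff, Finset.coe_Ioi, Set.mem_Ioi] at hb hd
    rcases Sym2.eq_iff.mp h with ⟨hbd, hac⟩ | ⟨hbc, had⟩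
    · have := @hp ⟨v, b⟩ ⟨w, d⟩ hbd
      have := @hp ⟨v, a⟩ ⟨w, c⟩ hac
      aesop
    · have := @hp ⟨v, b⟩ ⟨w, c⟩ hbc
      have := @hp ⟨v, a⟩ ⟨w, d⟩ had
      obtain rfl : v = w := by simp_all
      simp only [Sigma.mk.injEq, heq_eq_eq, true_and] at *
      subst_vars
      exact absurd hb.2.2 hd.2.2.asymm
  · rintro ⟨v, a, b⟩ hb
    simp only [Finset.mem_sigma, Finset.mem_univ, true_and, Finset.mem_Ioi] at hb
    exact X_sub_X_dvd_of_rename_swap_eq_neg (hf v hb.1 b a hb.2.ne')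

end LinearFactors

section Alternants

theorem map_det_vandermonde {A B F : Type*} [CommRing A] [CommRing B] [FunLike F A B]
    [RingHomClass F A B] (φ : F) {m : ℕ} (x : Fin m → A) :
    φ (Matrix.vandermonde x).det = (Matrix.vandermonde (φ ∘ x)).det := by
  simp [Matrix.det_vandermonde, map_prod]

theorem det_vandermonde_comp_perm {A : Type*} [CommRing A] {m : ℕ} (x : Fin m → A)
    (σ : Equiv.Perm (Fin m)) :
    (Matrix.vandermonde (x ∘ σ)).det = Equiv.Perm.sign σ • (Matrix.vandermonde x).det := by
  rw [Units.smul_def, zsmul_eq_mul, ← Matrix.det_permute]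
  rfl

theorem det_vandermonde_eq_mul_succAbove {A : Type*} [CommRing A] {k : ℕ} (x : Fin (k + 1) → A)
    (l : Fin (k + 1)) :
    (Matrix.vandermonde x).det = (-1) ^ (k + (l : ℕ)) *
      ((Matrix.vandermonde (x ∘ l.succAbove)).det * ∏ j, (x l - x (l.succAbove j))) := by
  have cycle := det_vandermonde_comp_perm x l.cycleRange.symm
  have det_cycle : (Matrix.vandermonde (x ∘ l.cycleRange.symm)).det =
      (-1) ^ k * ((Matrix.vandermonde (x ∘ l.succAbove)).det * ∏ j, (x l - x (l.succAbove j))) := by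
    have neg_prod : ∏ j, (x (l.succAbove j) - x l) = (-1) ^ k * ∏ j, (x l - x (l.succAbove j)) := by
      simpa using Finset.prod_neg (s := Finset.univ) fun j => x l - x (l.succAbove j)
    simp only [Matrix.det_vandermonde, Fin.prod_univ_succ, Function.comp_apply,
      Fin.cycleRange_symm_zero, Fin.cycleRange_symm_succ, Fin.Ioi_zero_eq_map, Finset.prod_map,
      Fin.coe_succEmb, Fin.prod_Ioi_succ, neg_prod]
    ring
  rw [Equiv.Perm.sign_symm, Fin.sign_cycleRange, det_cycle] at cycle
  rw [pow_add, mul_comm (_ ^ k), mul_assoc, cycle, Units.smul_def, zsmul_eq_mul]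
  simp [← mul_assoc, ← pow_add, ← two_mul]

theorem det_vandermonde_X_ne_zero {R : Type*} [CommRing R] [IsDomain R] {m : ℕ} :
    (Matrix.vandermonde (X : Fin m → MvPolynomial (Fin m) R)).det ≠ 0 :=
  Matrix.det_vandermonde_ne_zero_iff.mpr X_injective

section CommRing

variable {R A B : Type*} [CommRing R] [CommRing A] [Algebra R A] [CommRing B] [Algebra R B] {m : ℕ}

/-- The alternant `det (f u (x j))` of the polynomials `f u` at the points `x j`. -/
noncomputable def alternant (f : Fin m → Polynomial R) (x : Fin m → A) : A :=
  (Matrix.of fun u j => Polynomial.aeval (x j) (f u)).det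

theorem map_alternant (φ : A →ₐ[R] B) (f : Fin m → Polynomial R) (x : Fin m → A) :
    φ (alternant f x) = alternant f (φ ∘ x) := by
  rw [alternant, AlgHom.map_det]
  congr 1
  ext u j
  simp [Polynomial.aeval_algHom_apply]

theorem alternant_comp_perm (f : Fin m → Polynomial R) (x : Fin m → A) (σ : Equiv.Perm (Fin m)) :
    alternant f (x ∘ σ) = Equiv.Perm.sign σ • alternant f x := by
  rw [Units.smul_def, zsmul_eq_mul, alternant, alternant, ← Matrix.det_permute']
  rfl

theorem alternant_eq_sum_succAbove {k : ℕ} (f : Fin (k + 1) → Polynomial R) (x : Fin (k + 1) → A) :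
    alternant f x = ∑ l : Fin (k + 1),
      (-1) ^ (k + (l : ℕ)) * Polynomial.aeval (x l) (f (Fin.last k)) *
        alternant (f ∘ Fin.castSucc) (x ∘ l.succAbove) := by
  rw [alternant, Matrix.det_succ_row _ (Fin.last k)]
  refine Finset.sum_congr rfl fun l _ => ?_
  rw [Fin.val_last, Matrix.of_apply, alternant]
  congr 2
  ext u j
  simp [Matrix.submatrix_apply, Fin.succAbove_last]

end CommRing

section AlternantQuotient

variable {R : Type*} [CommRing R] [IsDomain R] [UniqueFactorizationMonoid R] [CharZero R] {m : ℕ}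

theorem det_vandermonde_dvd_alternant (f : Fin m → Polynomial R) :
    (Matrix.vandermonde X).det ∣ alternant f (X : Fin m → MvPolynomial (Fin m) R) := by
  have vandermonde_prod_dvd := prod_det_vandermonde_dvd (s := {()}) (p := fun _ => id)
    (f := alternant f (X : Fin m → MvPolynomial (Fin m) R)) (fun a b h => Sigma.ext rfl (by simpa))
    (fun _ _ a b hab => by
      rw [map_alternant, rename_comp_X, id, id, alternant_comp_perm, Equiv.Perm.sign_swap hab]
      simp)
  simpa using vandermonde_prod_dvd

/-- The alternant of `f` divided by the Vandermonde determinant; for `f u = x ^ d u` with distinct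
exponents this is, up to sign, a Schur polynomial. -/
noncomputable def alternantQuotient (f : Fin m → Polynomial R) : MvPolynomial (Fin m) R :=
  (det_vandermonde_dvd_alternant f).choose

theorem det_vandermonde_mul_alternantQuotient (f : Fin m → Polynomial R) :
    (Matrix.vandermonde X).det * alternantQuotient f = alternant f X :=
  (det_vandermonde_dvd_alternant f).choose_spec.symm

theorem det_vandermonde_mul_aeval_alternantQuotient {A : Type*} [CommRing A] [Algebra R A]
    (f : Fin m → Polynomial R) (x : Fin m → A) :
    (Matrix.vandermonde x).det * aeval x (alternantQuotient f) = alternant f x := by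
  have X_comp : aeval x ∘ X = x := funext fun j => aeval_X (R := R) x j
  simpa [map_det_vandermonde, map_alternant, X_comp] using
    congrArg (aeval x) (det_vandermonde_mul_alternantQuotient f)

theorem isSymmetric_alternantQuotient (f : Fin m → Polynomial R) :
    (alternantQuotient f).IsSymmetric := by
  intro σ
  have permuted := congrArg (rename σ) (det_vandermonde_mul_alternantQuotient f)
  rw [map_mul, map_det_vandermonde, map_alternant, rename_comp_X, det_vandermonde_comp_perm,
    alternant_comp_perm, smul_mul_assoc, smul_left_cancel_iff,
    ← det_vandermonde_mul_alternantQuotient] at permuted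
  exact mul_left_cancel₀ det_vandermonde_X_ne_zero permuted

/-- Laplace expansion along the last row, divided by the Vandermonde determinant. -/
theorem sum_aeval_alternantQuotient_div {K : Type*} [Field K] [Algebra R K] {k : ℕ}
    (f : Fin (k + 1) → Polynomial R) {x : Fin (k + 1) → K} (hx : Function.Injective x) :
    ∑ l : Fin (k + 1), aeval (x ∘ l.succAbove) (alternantQuotient (f ∘ Fin.castSucc)) *
      Polynomial.aeval (x l) (f (Fin.last k)) / ∏ j, (x l - x (l.succAbove j)) =
    aeval x (alternantQuotient f) := by
  apply mul_left_cancel₀ (Matrix.det_vandermonde_ne_zero_iff.mpr hx)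
  rw [det_vandermonde_mul_aeval_alternantQuotient, alternant_eq_sum_succAbove, Finset.mul_sum]
  refine Finset.sum_congr rfl fun l _ => ?_
  have prod_ne_zero : ∏ j, (x l - x (l.succAbove j)) ≠ 0 :=
    Finset.prod_ne_zero_iff.mpr fun j _ => sub_ne_zero.mpr (hx.ne (Fin.succAbove_ne l j).symm)
  rw [det_vandermonde_eq_mul_succAbove x l, ← det_vandermonde_mul_aeval_alternantQuotient]
  field_simp

end AlternantQuotient

section Span

variable {m : ℕ}

section CommRing

variable {R : Type*} [CommRing R]

/-- The antisymmetrization operator `∑ σ, sign σ • σ`, without the factor `1 / m!`. -/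
noncomputable def antisymmetrize (m : ℕ) (R : Type*) [CommRing R] :
    MvPolynomial (Fin m) R →ₗ[R] MvPolynomial (Fin m) R :=
  ∑ σ : Equiv.Perm (Fin m), Equiv.Perm.sign σ • (rename σ).toLinearMap

theorem antisymmetrize_apply (f : MvPolynomial (Fin m) R) :
    antisymmetrize m R f = ∑ σ : Equiv.Perm (Fin m), Equiv.Perm.sign σ • rename σ f := by
  simp [antisymmetrize, LinearMap.sum_apply]

theorem antisymmetrize_monomial (d : Fin m →₀ ℕ) :
    antisymmetrize m R (monomial d 1) =
      alternant (fun u => (Polynomial.X ^ d u : Polynomial R)) X := by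
  rw [antisymmetrize_apply, alternant, ← Matrix.det_transpose, Matrix.det_apply]
  refine Finset.sum_congr rfl fun σ _ => ?_
  rw [monomial_eq, Finsupp.prod_fintype _ _ (by simp)]
  simp [Matrix.transpose_apply]

theorem antisymmetrize_det_vandermonde_mul {g : MvPolynomial (Fin m) R} (hg : g.IsSymmetric) :
    antisymmetrize m R ((Matrix.vandermonde X).det * g) =
      (m.factorial : R) • ((Matrix.vandermonde X).det * g) := by
  have term (σ : Equiv.Perm (Fin m)) :
      Equiv.Perm.sign σ • rename σ ((Matrix.vandermonde X).det * g) =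
        (Matrix.vandermonde X).det * g := by
    rw [map_mul, hg σ, map_det_vandermonde, rename_comp_X, det_vandermonde_comp_perm,
      smul_mul_assoc, smul_smul, Int.units_mul_self, one_smul]
  rw [antisymmetrize_apply, Finset.sum_congr rfl fun σ _ => term σ, Finset.sum_const,
    Finset.card_univ, Fintype.card_perm, Fintype.card_fin, Nat.cast_smul_eq_nsmul]

end CommRing

variable {K : Type*} [Field K] [CharZero K]

theorem antisymmetrize_mem_map_span (f : MvPolynomial (Fin m) K) :
    antisymmetrize m K f ∈ (Submodule.span K (Set.range alternantQuotient)).map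
      (LinearMap.mulLeft K (Matrix.vandermonde X).det) := by
  induction f using MvPolynomial.induction_on' with
  | monomial d a =>
    have smul_monomial_one : monomial d a = a • monomial d (1 : K) := by simp [smul_monomial]
    rw [smul_monomial_one, map_smul, antisymmetrize_monomial]
    exact Submodule.smul_mem _ a ⟨alternantQuotient _, Submodule.subset_span ⟨_, rfl⟩,
      det_vandermonde_mul_alternantQuotient _⟩
  | add f g hf hg =>
    rw [map_add]
    exact Submodule.add_mem _ hf hg

theorem span_range_alternantQuotient :
    Submodule.span K (Set.range (alternantQuotient (R := K) (m := m))) =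
      Subalgebra.toSubmodule (symmetricSubalgebra (Fin m) K) := by
  apply le_antisymm
  · rw [Submodule.span_le]
    rintro _ ⟨f, rfl⟩
    exact isSymmetric_alternantQuotient f
  · intro g hg
    obtain ⟨q, hq, mul_q⟩ := antisymmetrize_mem_map_span ((Matrix.vandermonde X).det * g)
    rw [antisymmetrize_det_vandermonde_mul hg, LinearMap.mulLeft_apply, ← mul_smul_comm] at mul_q
    rw [mul_left_cancel₀ det_vandermonde_X_ne_zero mul_q, SetLike.mem_coe] at hq
    exact (Submodule.smul_mem_iff _ (Nat.cast_ne_zero.mpr m.factorial_ne_zero)).mp hq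

end Span

end Alternants

section Shuffles

open scoped Pointwise

variable {Q : FinQuiver n} {i : Fin n} {γ₁ γ₂ : Fin n → ℕ} {S : Fin n → Finset ℕ} {T : Finset ℕ}

theorem mem_shuffles :
    S ∈ shuffles γ₁ γ₂ ↔ ∀ v, S v ⊆ Finset.range (γ₁ v + γ₂ v) ∧ (S v).card = γ₁ v := by
  simp [shuffles, Fintype.mem_piFinset]

theorem card_shuffleCompl (hS : S ∈ shuffles γ₁ γ₂) (v : Fin n) :
    (shuffleCompl γ₁ γ₂ S v).card = γ₂ v := by
  obtain ⟨subset_range, card_eq⟩ := mem_shuffles.mp hS v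
  rw [shuffleCompl, Finset.card_sdiff_of_subset subset_range, card_eq, Finset.card_range,
    Nat.add_sub_cancel_left]

/-- The shuffles whose component at the vertex `i` is `T`. -/
noncomputable def shufflesAt (i : Fin n) (γ₁ γ₂ : Fin n → ℕ) (T : Finset ℕ) :
    Finset (Fin n → Finset ℕ) :=
  (shuffles γ₁ γ₂).filter fun S => S i = T

theorem mem_shufflesAt : S ∈ shufflesAt i γ₁ γ₂ T ↔ S ∈ shuffles γ₁ γ₂ ∧ S i = T :=
  Finset.mem_filter

/-- The product `∏ (ω_{v,j'} - ω_{w,j})` over `j' ∈ A` and `j ∈ B`, out of which the numerators and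
denominators of the localization formula are built. -/
noncomputable def crossProd (v w : Fin n) (A B : Finset ℕ) : PolyQ n :=
  ∏ j' ∈ A, ∏ j ∈ B, (X (v, j') - X (w, j))

theorem isHomogeneous_crossProd (v w : Fin n) (A B : Finset ℕ) :
    (crossProd v w A B).IsHomogeneous (A.card * B.card) := by
  have homogeneous := IsHomogeneous.prod (R := ℚ) A _ _ fun j' _ => IsHomogeneous.prod B _ _
    fun j _ => (isHomogeneous_X ℚ (v, j')).sub (isHomogeneous_X ℚ (w, j))
  simpa [crossProd] using homogeneous

/-- The denominator of the localization formula, without the factor at the vertex `i`. -/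
noncomputable def interactionDenAway (i : Fin n) (γ₁ γ₂ : Fin n → ℕ) (S : Fin n → Finset ℕ) :
    PolyQ n :=
  ∏ v ∈ Finset.univ.erase i, crossProd v v (shuffleCompl γ₁ γ₂ S v) (S v)

theorem interactionDen_eq_crossProd_mul (i : Fin n) :
    interactionDen γ₁ γ₂ S =
      crossProd i i (shuffleCompl γ₁ γ₂ S i) (S i) * interactionDenAway i γ₁ γ₂ S :=
  (Finset.mul_prod_erase _ (fun v => crossProd v v (shuffleCompl γ₁ γ₂ S v) (S v))
    (Finset.mem_univ i)).symm

theorem interactionNum_eq_prod_crossProd :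
    interactionNum Q γ₁ γ₂ S =
      ∏ a, crossProd (Q.hd a) (Q.tl a) (shuffleCompl γ₁ γ₂ S (Q.hd a)) (S (Q.tl a)) :=
  rfl

theorem isHomogeneous_interactionNum (hS : S ∈ shuffles γ₁ γ₂) :
    (interactionNum Q γ₁ γ₂ S).IsHomogeneous (∑ a, γ₂ (Q.hd a) * γ₁ (Q.tl a)) := by
  refine IsHomogeneous.prod _ _ _ fun a _ => ?_
  have homogeneous := isHomogeneous_crossProd (Q.hd a) (Q.tl a)
    (shuffleCompl γ₁ γ₂ S (Q.hd a)) (S (Q.tl a))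
  rwa [card_shuffleCompl hS, (mem_shuffles.mp hS _).2] at homogeneous

theorem isHomogeneous_interactionDenAway (hS : S ∈ shuffles γ₁ γ₂) :
    (interactionDenAway i γ₁ γ₂ S).IsHomogeneous (∑ v ∈ Finset.univ.erase i, γ₂ v * γ₁ v) := by
  refine IsHomogeneous.prod _ _ _ fun v _ => ?_
  have homogeneous := isHomogeneous_crossProd v v (shuffleCompl γ₁ γ₂ S v) (S v)
  rwa [card_shuffleCompl hS, (mem_shuffles.mp hS _).2] at homogeneous

/-- The permutation of the variables `ω_{v,j}` permuting the second index by `σ v` at each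
vertex `v`. -/
def variablePerm (σ : Fin n → Equiv.Perm ℕ) : Equiv.Perm (Fin n × ℕ) :=
  Equiv.prodShear (Equiv.refl _) σ

theorem variablePerm_apply (σ : Fin n → Equiv.Perm ℕ) (v : Fin n) (j : ℕ) :
    variablePerm σ (v, j) = (v, σ v j) :=
  rfl

theorem variablePerm_mulSingle_swap (v : Fin n) (a b : ℕ) :
    variablePerm (Pi.mulSingle v (Equiv.swap a b)) = Equiv.swap (v, a) (v, b) := by
  ext1 ⟨w, j⟩
  rcases eq_or_ne w v with rfl | hw
  · simp only [variablePerm_apply, Pi.mulSingle_eq_same, Equiv.swap_apply_def, Prod.mk.injEq,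
      true_and]
    split_ifs <;> rfl
  · rw [variablePerm_apply, Pi.mulSingle_eq_of_ne hw, Equiv.swap_apply_of_ne_of_ne] <;> simp [hw]

theorem rename_crossProd (σ : Fin n → Equiv.Perm ℕ) (v w : Fin n) (A B : Finset ℕ) :
    rename (variablePerm σ) (crossProd v w A B) = crossProd v w (σ v • A) (σ w • B) := by
  simp [crossProd, variablePerm_apply, Finset.smul_finset_def, Finset.prod_image]

variable {σ : Fin n → Equiv.Perm ℕ}

theorem shuffleCompl_smul
    (hσ : ∀ v, σ v • Finset.range (γ₁ v + γ₂ v) = Finset.range (γ₁ v + γ₂ v)) :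
    shuffleCompl γ₁ γ₂ (σ • S) = σ • shuffleCompl γ₁ γ₂ S := by
  funext v
  rw [Pi.smul_apply', shuffleCompl, shuffleCompl, Finset.smul_finset_sdiff, hσ, Pi.smul_apply']

theorem rename_interactionNum
    (hσ : ∀ v, σ v • Finset.range (γ₁ v + γ₂ v) = Finset.range (γ₁ v + γ₂ v)) :
    rename (variablePerm σ) (interactionNum Q γ₁ γ₂ S) = interactionNum Q γ₁ γ₂ (σ • S) := by
  simp only [interactionNum_eq_prod_crossProd, map_prod, rename_crossProd, shuffleCompl_smul hσ,
    Pi.smul_apply']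

theorem rename_interactionDenAway
    (hσ : ∀ v, σ v • Finset.range (γ₁ v + γ₂ v) = Finset.range (γ₁ v + γ₂ v)) :
    rename (variablePerm σ) (interactionDenAway i γ₁ γ₂ S) =
      interactionDenAway i γ₁ γ₂ (σ • S) := by
  simp only [interactionDenAway, map_prod, rename_crossProd, shuffleCompl_smul hσ, Pi.smul_apply']

theorem smul_mem_shufflesAt
    (hσ : ∀ v, σ v • Finset.range (γ₁ v + γ₂ v) = Finset.range (γ₁ v + γ₂ v)) (hi : σ i = 1)
    (hS : S ∈ shufflesAt i γ₁ γ₂ T) : σ • S ∈ shufflesAt i γ₁ γ₂ T := by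
  simp only [mem_shufflesAt, mem_shuffles, Pi.smul_apply', hi, one_smul,
    Finset.card_smul_finset] at hS ⊢
  exact ⟨fun v => ⟨hσ v ▸ Finset.smul_finset_subset_smul_finset (hS.1 v).1, (hS.1 v).2⟩, hS.2⟩

end Shuffles

section VertexVandermonde

variable {i : Fin n} {γ₁ γ₂ : Fin n → ℕ} {S : Fin n → Finset ℕ}

/-- The Vandermonde determinant in the variables `ω_{v,0}, …, ω_{v,N-1}`. -/
noncomputable def vertexVandermonde (v : Fin n) (N : ℕ) : PolyQ n :=
  (Matrix.vandermonde fun j : Fin N => (X (v, (j : ℕ)) : PolyQ n)).det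

theorem rename_swap_vertexVandermonde (v : Fin n) {N a b : ℕ} (ha : a < N) (hb : b < N)
    (hab : a ≠ b) :
    rename (Equiv.swap (v, a) (v, b)) (vertexVandermonde v N) = -vertexVandermonde v N := by
  have rename_comp : (rename (Equiv.swap (v, a) (v, b)) ∘ fun j : Fin N => X (v, (j : ℕ))) =
      (fun j : Fin N => (X (v, (j : ℕ)) : PolyQ n)) ∘ Equiv.swap ⟨a, ha⟩ ⟨b, hb⟩ := by
    funext j
    simp only [Function.comp_apply, rename_X, Equiv.swap_apply_def, Prod.mk.injEq, true_and,
      Fin.ext_iff]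
    split_ifs <;> rfl
  rw [vertexVandermonde, map_det_vandermonde, rename_comp, det_vandermonde_comp_perm,
    Equiv.Perm.sign_swap (by simpa using hab), Units.neg_smul, one_smul]

theorem rename_swap_vertexVandermonde_of_ne {v w : Fin n} (hvw : w ≠ v) (N a b : ℕ) :
    rename (Equiv.swap (v, a) (v, b)) (vertexVandermonde w N) = vertexVandermonde w N := by
  rw [vertexVandermonde, map_det_vandermonde]
  congr 2
  funext j
  simp [Equiv.swap_apply_of_ne_of_ne, hvw]

theorem crossProd_dvd_vertexVandermonde (v : Fin n) {N : ℕ} {A B : Finset ℕ}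
    (hA : A ⊆ Finset.range N) (hB : B ⊆ Finset.range N) (hAB : Disjoint A B) :
    crossProd v v A B ∣ vertexVandermonde v N := by
  rw [crossProd, ← Finset.prod_product']
  have ne_of_mem : ∀ t ∈ A ×ˢ B, t.1 ≠ t.2 := fun t ht => by
    rw [Finset.mem_product] at ht
    exact Finset.disjoint_iff_ne.mp hAB _ ht.1 _ ht.2
  refine prod_X_sub_X_dvd (p := fun t : ℕ × ℕ => (v, t.1)) (q := fun t => (v, t.2))
    (fun t ht h => ne_of_mem t ht (congrArg Prod.snd h)) ?_ fun t ht =>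
      X_sub_X_dvd_of_rename_swap_eq_neg (rename_swap_vertexVandermonde v
        (Finset.mem_range.mp (hA (Finset.mem_product.mp ht).1))
        (Finset.mem_range.mp (hB (Finset.mem_product.mp ht).2)) (ne_of_mem t ht))
  rintro ⟨a, b⟩ hab ⟨c, d⟩ hcd h
  simp only [Finset.coe_product, Set.mem_prod, Finset.mem_coe] at hab hcd
  have := Finset.disjoint_iff_ne.mp hAB _ hab.1 _ hcd.2
  simp_all

/-- The product of the Vandermonde determinants at all vertices other than `i`: the common
denominator of the partial localization sums. -/
noncomputable def vandermondeAway (i : Fin n) (N : Fin n → ℕ) : PolyQ n :=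
  ∏ v ∈ Finset.univ.erase i, vertexVandermonde v (N v)

theorem aeval_vandermondeAway_ne_zero {K : Type*} [Field K] [Algebra ℚ K] {x : Fin n × ℕ → K}
    (hx : ∀ v, Function.Injective fun j => x (v, j)) (N : Fin n → ℕ) :
    aeval x (vandermondeAway i N) ≠ 0 := by
  rw [vandermondeAway, map_prod]
  refine Finset.prod_ne_zero_iff.mpr fun v _ => ?_
  rw [vertexVandermonde, map_det_vandermonde, Matrix.det_vandermonde_ne_zero_iff]
  intro a b hab
  simpa [(hx v).eq_iff, Fin.ext_iff] using hab

theorem rename_swap_vandermondeAway {v : Fin n} (hv : v ≠ i) {N : Fin n → ℕ} {a b : ℕ}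
    (ha : a < N v) (hb : b < N v) (hab : a ≠ b) :
    rename (Equiv.swap (v, a) (v, b)) (vandermondeAway i N) = -vandermondeAway i N := by
  have hv' : v ∈ Finset.univ.erase i := by simp [hv]
  rw [vandermondeAway, map_prod, ← Finset.mul_prod_erase _ _ hv', ← Finset.mul_prod_erase _ _ hv',
    rename_swap_vertexVandermonde v ha hb hab, neg_mul]
  congr 2
  exact Finset.prod_congr rfl fun w hw =>
    rename_swap_vertexVandermonde_of_ne (Finset.ne_of_mem_erase hw) _ _ _

theorem interactionDenAway_dvd_vandermondeAway (hS : S ∈ shuffles γ₁ γ₂) :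
    interactionDenAway i γ₁ γ₂ S ∣ vandermondeAway i (γ₁ + γ₂) :=
  Finset.prod_dvd_prod_of_dvd _ _ fun v _ => crossProd_dvd_vertexVandermonde v
    Finset.sdiff_subset (mem_shuffles.mp hS v).1 Finset.sdiff_disjoint

end VertexVandermonde

section TautologicalPoint

/-- The tautological point `(ω_{v,j})` over the field of rational functions. -/
noncomputable def tautologicalPoint (n : ℕ) (p : Fin n × ℕ) : FractionRing (PolyQ n) :=
  algebraMap (PolyQ n) _ (X p)

theorem tautologicalPoint_injective : Function.Injective (tautologicalPoint n) :=
  (IsFractionRing.injective (PolyQ n) _).comp X_injective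

theorem aeval_tautologicalPoint (f : PolyQ n) : aeval (tautologicalPoint n) f = algebraMap _ _ f :=
  (DFunLike.congr_fun (aeval_unique (IsScalarTower.toAlgHom ℚ (PolyQ n) _)) f).symm

theorem vandermondeAway_ne_zero {i : Fin n} {N : Fin n → ℕ} : vandermondeAway i N ≠ 0 := fun h =>
  aeval_vandermondeAway_ne_zero (i := i)
    (fun v => tautologicalPoint_injective.comp (Prod.mk_right_injective v)) N (by rw [h, map_zero])

end TautologicalPoint

section LocalSum

open scoped Pointwise

variable (Q : FinQuiver n) (i : Fin n) (γ₁ γ₂ : Fin n → ℕ) (T : Finset ℕ)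

/-- The part of the localization sum over the shuffles `S` with `S i = T`, evaluated at `x`, with
the factors involving `f₁`, `f₂` and the denominator at the vertex `i` removed. -/
noncomputable def localSum {K : Type*} [Field K] [Algebra ℚ K] (x : Fin n × ℕ → K) : K :=
  ∑ S ∈ shufflesAt i γ₁ γ₂ T,
    aeval x (interactionNum Q γ₁ γ₂ S) / aeval x (interactionDenAway i γ₁ γ₂ S)

variable {Q i γ₁ γ₂ T}

theorem localSum_comp_variablePerm {K : Type*} [Field K] [Algebra ℚ K] (x : Fin n × ℕ → K)
    {σ : Fin n → Equiv.Perm ℕ}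
    (hσ : ∀ v, σ v • Finset.range (γ₁ v + γ₂ v) = Finset.range (γ₁ v + γ₂ v)) (hi : σ i = 1) :
    localSum Q i γ₁ γ₂ T (x ∘ variablePerm σ) = localSum Q i γ₁ γ₂ T x := by
  have hσ_inv : ∀ v, σ⁻¹ v • Finset.range (γ₁ v + γ₂ v) = Finset.range (γ₁ v + γ₂ v) :=
    fun v => by rw [Pi.inv_apply, inv_smul_eq_iff, hσ]
  refine Finset.sum_nbij' (σ • ·) (σ⁻¹ • ·) (fun S => smul_mem_shufflesAt hσ hi)
    (fun S => smul_mem_shufflesAt hσ_inv (by simp [hi])) (fun S _ => inv_smul_smul σ S)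
    (fun S _ => smul_inv_smul σ S) fun S _ => ?_
  rw [← aeval_rename, ← aeval_rename, rename_interactionNum hσ, rename_interactionDenAway hσ]

theorem localSum_comp_swap {K : Type*} [Field K] [Algebra ℚ K] (x : Fin n × ℕ → K) {v : Fin n}
    (hv : v ≠ i) {a b : ℕ} (ha : a < γ₁ v + γ₂ v) (hb : b < γ₁ v + γ₂ v) :
    localSum Q i γ₁ γ₂ T (x ∘ Equiv.swap (v, a) (v, b)) = localSum Q i γ₁ γ₂ T x := by
  rw [← variablePerm_mulSingle_swap]
  refine localSum_comp_variablePerm x (fun w => ?_) (Pi.mulSingle_eq_of_ne hv.symm _)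
  rcases eq_or_ne w v with rfl | hw
  · rw [Pi.mulSingle_eq_same]
    refine Finset.eq_of_subset_of_card_le (fun j hj => ?_) (Finset.card_smul_finset _ _).ge
    obtain ⟨l, hl, rfl⟩ := Finset.mem_smul_finset.mp hj
    simp only [Equiv.Perm.smul_def, Equiv.swap_apply_def, Finset.mem_range] at hl ⊢
    split_ifs <;> assumption
  · rw [Pi.mulSingle_eq_of_ne hw, one_smul]

theorem sum_arrows_eq_sum_erase (h : Q.euler γ₁ γ₂ = γ₁ i * γ₂ i) :
    ∑ a, γ₂ (Q.hd a) * γ₁ (Q.tl a) = ∑ v ∈ Finset.univ.erase i, γ₂ v * γ₁ v := by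
  rw [FinQuiver.euler, ← Finset.add_sum_erase _ _ (Finset.mem_univ i)] at h
  zify
  simp only [mul_comm (γ₂ _ : ℤ)]
  linarith

/-- Clearing denominators; the degree bound is where the Euler form enters. -/
theorem exists_localSum_numerator (h : Q.euler γ₁ γ₂ = γ₁ i * γ₂ i) :
    ∃ P : PolyQ n, P.totalDegree ≤ (vandermondeAway i (γ₁ + γ₂)).totalDegree ∧
      ∀ {K : Type} [Field K] [Algebra ℚ K] (x : Fin n × ℕ → K),
        aeval x (vandermondeAway i (γ₁ + γ₂)) ≠ 0 →
        aeval x P = localSum Q i γ₁ γ₂ T x * aeval x (vandermondeAway i (γ₁ + γ₂)) := by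
  choose! r hr using fun S (hS : S ∈ shufflesAt i γ₁ γ₂ T) =>
    interactionDenAway_dvd_vandermondeAway (i := i) (mem_shufflesAt.mp hS).1
  refine ⟨∑ S ∈ shufflesAt i γ₁ γ₂ T, interactionNum Q γ₁ γ₂ S * r S,
    totalDegree_finsetSum_le fun S hS => ?_, fun {K} _ _ x hx => ?_⟩
  · have hS' := (mem_shufflesAt.mp hS).1
    have den_ne_zero : interactionDenAway i γ₁ γ₂ S * r S ≠ 0 :=
      hr S hS ▸ vandermondeAway_ne_zero
    refine (totalDegree_mul _ _).trans ?_
    rw [hr S hS, totalDegree_mul_of_isDomain (left_ne_zero_of_mul den_ne_zero)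
      (right_ne_zero_of_mul den_ne_zero), (isHomogeneous_interactionDenAway hS').totalDegree
      (left_ne_zero_of_mul den_ne_zero), ← sum_arrows_eq_sum_erase h]
    exact Nat.add_le_add_right (isHomogeneous_interactionNum hS').totalDegree_le _
  · rw [map_sum, localSum, Finset.sum_mul]
    refine Finset.sum_congr rfl fun S hS => ?_
    rw [hr S hS, map_mul] at hx
    rw [hr S hS, map_mul, map_mul]
    field_simp [left_ne_zero_of_mul hx]

theorem rename_swap_localSum_numerator {P : PolyQ n}
    (hP : ∀ x : Fin n × ℕ → FractionRing (PolyQ n),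
      aeval x (vandermondeAway i (γ₁ + γ₂)) ≠ 0 →
      aeval x P = localSum Q i γ₁ γ₂ T x * aeval x (vandermondeAway i (γ₁ + γ₂)))
    {v : Fin n} (hv : v ≠ i) {a b : ℕ} (ha : a < γ₁ v + γ₂ v) (hb : b < γ₁ v + γ₂ v)
    (hab : a ≠ b) : rename (Equiv.swap (v, a) (v, b)) P = -P := by
  have eval_ne_zero (τ : Equiv.Perm (Fin n × ℕ)) :
      aeval (tautologicalPoint n ∘ τ) (vandermondeAway i (γ₁ + γ₂)) ≠ 0 :=
    aeval_vandermondeAway_ne_zero (fun w => (tautologicalPoint_injective.comp τ.injective).comp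
      (Prod.mk_right_injective w)) _
  have eval_swapped := hP _ (eval_ne_zero (Equiv.swap (v, a) (v, b)))
  rw [localSum_comp_swap _ hv ha hb, ← aeval_rename, ← aeval_rename,
    rename_swap_vandermondeAway hv ha hb hab, map_neg, mul_neg,
    ← hP (tautologicalPoint n) (eval_ne_zero 1), ← map_neg,
    aeval_tautologicalPoint, aeval_tautologicalPoint] at eval_swapped
  exact IsFractionRing.injective _ _ eval_swapped

/-- The numerator is antisymmetric at each vertex other than `i`, hence divisible by the common
denominator, and there is no degree left for the quotient. -/
theorem exists_localSum_eq_algebraMap (h : Q.euler γ₁ γ₂ = γ₁ i * γ₂ i) :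
    ∃ c : ℚ, ∀ {K : Type} [Field K] [Algebra ℚ K] (x : Fin n × ℕ → K),
      (∀ v, Function.Injective fun j => x (v, j)) →
      localSum Q i γ₁ γ₂ T x = algebraMap ℚ K c := by
  obtain ⟨P, degree_le, hP⟩ := exists_localSum_numerator (T := T) h
  obtain ⟨q, rfl⟩ : vandermondeAway i (γ₁ + γ₂) ∣ P :=
    prod_det_vandermonde_dvd (p := fun v (j : Fin ((γ₁ + γ₂) v)) => (v, (j : ℕ)))
      (by
        rintro ⟨v, a⟩ ⟨w, b⟩ hab
        simp only [Prod.mk.injEq] at hab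
        obtain ⟨rfl, hab⟩ := hab
        rw [Fin.ext hab])
      fun v hv a b hab => rename_swap_localSum_numerator hP (Finset.ne_of_mem_erase hv) a.2 b.2
        (Fin.val_ne_of_ne hab)
  obtain ⟨c, rfl⟩ : ∃ c, q = C c := by
    rcases eq_or_ne q 0 with rfl | hq
    · exact ⟨0, C_0.symm⟩
    · rw [totalDegree_mul_of_isDomain vandermondeAway_ne_zero hq] at degree_le
      exact ⟨_, totalDegree_eq_zero_iff_eq_C.mp (by omega)⟩
  refine ⟨c, fun {K} _ _ x hx => ?_⟩
  have hx' := aeval_vandermondeAway_ne_zero (i := i) hx (γ₁ + γ₂)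
  have eval := hP x hx'
  rw [map_mul, mul_comm, aeval_C] at eval
  exact (mul_right_cancel₀ hx' eval).symm

end LocalSum

section EulerForm

variable {Q : FinQuiver n}

theorem FinQuiver.euler_add_left (α α' β : Fin n → ℕ) :
    Q.euler (α + α') β = Q.euler α β + Q.euler α' β := by
  simp only [FinQuiver.euler, Pi.add_apply, Nat.cast_add, add_mul, Finset.sum_add_distrib]
  ring

theorem FinQuiver.euler_nsmul_left (k : ℕ) (α β : Fin n → ℕ) :
    Q.euler (k • α) β = k * Q.euler α β := by
  simp only [FinQuiver.euler, Pi.smul_apply, smul_eq_mul, Nat.cast_mul, mul_assoc,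
    ← Finset.mul_sum, mul_sub]

theorem FinQuiver.euler_sum_right {ι : Type*} (s : Finset ι) (α : Fin n → ℕ)
    (β : ι → Fin n → ℕ) : Q.euler α (∑ b ∈ s, β b) = ∑ b ∈ s, Q.euler α (β b) := by
  simp only [FinQuiver.euler, Finset.sum_apply, Nat.cast_sum, Finset.mul_sum,
    Finset.sum_sub_distrib]
  rw [Finset.sum_comm, Finset.sum_comm (s := Finset.univ (α := Q.Arr))]

theorem FinQuiver.sum_euler_eq_sub {ι : Type*} {I : Finset ι} {β : Fin n → ℕ}
    {s e : ι → Fin n → ℕ} (h_add : ∀ b ∈ I, s b + e b = β) (h_sum : ∑ b ∈ I, e b = β) :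
    ∑ b ∈ I, Q.euler (s b) (e b) = Q.euler β β - ∑ b ∈ I, Q.euler (e b) (e b) := by
  nth_rewrite 2 [← h_sum]
  rw [FinQuiver.euler_sum_right, ← Finset.sum_sub_distrib]
  refine Finset.sum_congr rfl fun b hb => ?_
  rw [← h_add b hb, FinQuiver.euler_add_left, add_sub_cancel_right]

/-- A dimension vector on which the Tits form takes the value `1`, and such that the Tits form is
positive on all nonzero dimension vectors below it. The positive roots of Dynkin subquivers have
this property. -/
structure FinQuiver.IsTitsPositiveRoot (Q : FinQuiver n) (β : Fin n → ℕ) : Prop where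
  euler_self : Q.euler β β = 1
  euler_self_pos : ∀ e ≤ β, e ≠ 0 → 0 < Q.euler e e

variable {β : Fin n → ℕ}

theorem FinQuiver.IsTitsPositiveRoot.sum_euler_neg (hβ : Q.IsTitsPositiveRoot β) {ι : Type*}
    {I : Finset ι} {s e : ι → Fin n → ℕ} (h_add : ∀ b ∈ I, s b + e b = β)
    (h_sum : ∑ b ∈ I, e b = β) {b b' : ι} (hb : b ∈ I) (hb' : b' ∈ I) (hbb' : b ≠ b')
    (he : e b ≠ 0) (he' : e b' ≠ 0) : ∑ b ∈ I, Q.euler (s b) (e b) < 0 := by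
  have e_le : ∀ c ∈ I, e c ≤ β := fun c hc => h_add c hc ▸ le_add_self
  have euler_nonneg : ∀ c ∈ I, 0 ≤ Q.euler (e c) (e c) := fun c hc => by
    by_cases h : e c = 0
    · simp [h, FinQuiver.euler]
    · exact (hβ.euler_self_pos _ (e_le c hc) h).le
  have pair_le : Q.euler (e b) (e b) + Q.euler (e b') (e b') ≤ ∑ c ∈ I, Q.euler (e c) (e c) := by
    rw [← Finset.sum_pair hbb' (f := fun c => Q.euler (e c) (e c))]
    exact Finset.sum_le_sum_of_subset_of_nonneg (by simp [Finset.insert_subset_iff, hb, hb'])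
      fun c hc _ => euler_nonneg c hc
  have := hβ.euler_self_pos _ (e_le b hb) he
  have := hβ.euler_self_pos _ (e_le b' hb') he'
  rw [FinQuiver.sum_euler_eq_sub h_add h_sum, hβ.euler_self]
  omega

theorem Subquiver.euler_eq_eulerZ {Q' : Subquiver Q} (hQ' : Q'.Full) {α β : Fin n → ℕ}
    (hα : ∀ v ∉ Q'.verts, α v = 0) (hβ : ∀ v ∉ Q'.verts, β v = 0) :
    Q.euler α β = Q'.eulerZ (fun v => α v) fun v => β v := by
  rw [FinQuiver.euler, Subquiver.eulerZ]
  congr 1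
  · exact (Finset.sum_subset (Finset.subset_univ _) fun v _ hv => by simp [hα v hv]).symm
  · refine (Finset.sum_subset (Finset.subset_univ _) fun a _ ha => ?_).symm
    by_cases hhd : Q.hd a ∈ Q'.verts
    · simp [hα _ fun htl => ha (hQ' a hhd htl)]
    · simp [hβ _ hhd]

theorem Subquiver.IsPosRoot.isTitsPositiveRoot {Q' : Subquiver Q} (hβ : Q'.IsPosRoot β)
    (hQ' : Q'.Full) (hpos : Q'.PosDefTits) : Q.IsTitsPositiveRoot β where
  euler_self := (Subquiver.euler_eq_eulerZ hQ' hβ.1 hβ.1).trans hβ.2.2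
  euler_self_pos e he e_ne_zero := by
    have he_supp : ∀ v ∉ Q'.verts, e v = 0 := fun v hv => Nat.eq_zero_of_le_zero (hβ.1 v hv ▸ he v)
    rw [Subquiver.euler_eq_eulerZ hQ' he_supp he_supp]
    refine hpos _ (fun v hv => by simp [he_supp v hv]) fun h => e_ne_zero ?_
    exact funext fun v => by simpa using congrFun h v

end EulerForm

section Residues

variable {r : ℕ}

/-- The number of elements of `A` congruent to `b` modulo `r`, for `b < r`. -/
def residueCount (r : ℕ) (A : Finset ℕ) (b : ℕ) : ℕ :=
  (A.filter fun j => j % r = b).card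

theorem residueCount_add_sdiff {A B : Finset ℕ} (h : A ⊆ B) (b : ℕ) :
    residueCount r A b + residueCount r (B \ A) b = residueCount r B b := by
  rw [residueCount, residueCount, ← Finset.card_union_of_disjoint, ← Finset.filter_union,
    Finset.union_sdiff_of_subset h, residueCount]
  exact Finset.disjoint_filter_filter Finset.disjoint_sdiff

theorem sum_residueCount (hr : 0 < r) (A : Finset ℕ) :
    ∑ b ∈ Finset.range r, residueCount r A b = A.card :=
  (Finset.card_eq_sum_card_fiberwise fun j _ => by simpa using Nat.mod_lt j hr).symm

theorem residueCount_range_mul (m : ℕ) {b : ℕ} (hb : b < r) :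
    residueCount r (Finset.range (r * m)) b = m := by
  have hr : 0 < r := b.zero_le.trans_lt hb
  have count_eq := Nat.count_modEq_card (r * m) hr b
  rw [Nat.count_eq_card_filter_range] at count_eq
  simpa [residueCount, Nat.ModEq, Nat.mod_eq_of_lt hb, hr] using count_eq

/-- The number of pairs in `A × B` that are congruent modulo `r`. -/
def residueCollisions (r : ℕ) (A B : Finset ℕ) : ℕ :=
  ∑ j' ∈ A, ∑ j ∈ B, if j' % r = j % r then 1 else 0

theorem residueCollisions_eq_sum (hr : 0 < r) (A B : Finset ℕ) :
    residueCollisions r A B =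
      ∑ b ∈ Finset.range r, residueCount r A b * residueCount r B b := by
  have inner_sum (j' : ℕ) :
      (∑ j ∈ B, if j' % r = j % r then 1 else 0) = residueCount r B (j' % r) := by
    simp [residueCount, eq_comm]
  rw [residueCollisions, Finset.sum_congr rfl fun j' _ => inner_sum j',
    ← Finset.sum_fiberwise_of_maps_to (t := Finset.range r) (g := fun j => j % r)
      fun j _ => by simpa using Nat.mod_lt j hr]
  refine Finset.sum_congr rfl fun b _ => ?_
  rw [residueCount, ← smul_eq_mul, ← Finset.sum_const]
  exact Finset.sum_congr rfl fun j hj => by rw [(Finset.mem_filter.mp hj).2]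

end Residues

section Degeneration

open Filter Topology

/-- The point `ω_{v,j} = (j mod r) + ε j`, at which the variables with congruent indices collide as
`ε → 0`. -/
noncomputable def residuePoint (r : ℕ) (ε : ℝ) (p : Fin n × ℕ) : ℝ :=
  (p.2 % r : ℕ) + ε * p.2

theorem residuePoint_injective (r : ℕ) {ε : ℝ} (hε : Irrational ε) (v : Fin n) :
    Function.Injective fun j => residuePoint r ε (v, j) := by
  intro a b hab
  by_contra hne
  have hne' : (b : ℤ) - a ≠ 0 := by omega
  refine (hε.mul_intCast hne').ne_int ((a % r : ℕ) - (b % r : ℕ)) ?_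
  simp only [residuePoint] at hab
  simp only [Int.cast_sub, Int.cast_natCast]
  linarith

/-- The coefficient of the lowest power of `ε` in `ω_{v,j'} - ω_{w,j}` at `residuePoint r ε`. -/
noncomputable def leadingDifference (r j' j : ℕ) : ℝ :=
  if j' % r = j % r then (j' : ℝ) - j else ((j' % r : ℕ) : ℝ) - (j % r : ℕ)

theorem leadingDifference_ne_zero (r : ℕ) {j' j : ℕ} (h : j' ≠ j) :
    leadingDifference r j' j ≠ 0 := by
  rw [leadingDifference]
  split_ifs with hmod
  · exact sub_ne_zero.mpr (Nat.cast_injective.ne h)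
  · exact sub_ne_zero.mpr (Nat.cast_injective.ne hmod)

theorem tendsto_residuePoint_sub_div (r : ℕ) (v w : Fin n) (j' j : ℕ) :
    Tendsto (fun ε => (residuePoint r ε (v, j') - residuePoint r ε (w, j)) /
      ε ^ (if j' % r = j % r then 1 else 0)) (𝓝[≠] 0) (𝓝 (leadingDifference r j' j)) := by
  rw [leadingDifference]
  split_ifs with h
  · refine tendsto_const_nhds.congr' ?_
    filter_upwards [self_mem_nhdsWithin] with ε hε
    have hε' : ε ≠ 0 := hε
    simp only [residuePoint, h, add_sub_add_left_eq_sub, ← mul_sub, pow_one]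
    field_simp
  · have continuous_sub : Continuous fun ε =>
        residuePoint r ε (v, j') - residuePoint r ε (w, j) := by
      unfold residuePoint
      fun_prop
    simpa [residuePoint] using (continuous_sub.tendsto 0).mono_left nhdsWithin_le_nhds

/-- The coefficient of the lowest power of `ε` in `crossProd v w A B` at `residuePoint r ε`. -/
noncomputable def leadingCrossProd (r : ℕ) (A B : Finset ℕ) : ℝ :=
  ∏ j' ∈ A, ∏ j ∈ B, leadingDifference r j' j

theorem leadingCrossProd_ne_zero (r : ℕ) {A B : Finset ℕ} (h : Disjoint A B) :
    leadingCrossProd r A B ≠ 0 :=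
  Finset.prod_ne_zero_iff.mpr fun _ hj' => Finset.prod_ne_zero_iff.mpr fun _ hj =>
    leadingDifference_ne_zero r (Finset.disjoint_iff_ne.mp h _ hj' _ hj)

theorem tendsto_crossProd_div (r : ℕ) (v w : Fin n) (A B : Finset ℕ) :
    Tendsto (fun ε => aeval (residuePoint r ε) (crossProd v w A B) /
      ε ^ residueCollisions r A B) (𝓝[≠] 0) (𝓝 (leadingCrossProd r A B)) := by
  simp only [crossProd, residueCollisions, map_prod, map_sub, aeval_X,
    ← Finset.prod_pow_eq_pow_sum, ← Finset.prod_div_distrib]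
  exact tendsto_finsetProd _ fun j' _ => tendsto_finsetProd _ fun j _ =>
    tendsto_residuePoint_sub_div r v w j' j

variable (Q : FinQuiver n) (i : Fin n) (γ₁ γ₂ : Fin n → ℕ) (S : Fin n → Finset ℕ)

theorem tendsto_interactionNum_div (r : ℕ) :
    Tendsto (fun ε => aeval (residuePoint r ε) (interactionNum Q γ₁ γ₂ S) /
        ε ^ ∑ a, residueCollisions r (shuffleCompl γ₁ γ₂ S (Q.hd a)) (S (Q.tl a)))
      (𝓝[≠] 0)
      (𝓝 (∏ a, leadingCrossProd r (shuffleCompl γ₁ γ₂ S (Q.hd a)) (S (Q.tl a)))) := by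
  simp only [interactionNum_eq_prod_crossProd, map_prod, ← Finset.prod_pow_eq_pow_sum,
    ← Finset.prod_div_distrib]
  exact tendsto_finsetProd _ fun a _ => tendsto_crossProd_div r _ _ _ _

theorem tendsto_interactionDenAway_div (r : ℕ) :
    Tendsto (fun ε => aeval (residuePoint r ε) (interactionDenAway i γ₁ γ₂ S) /
        ε ^ ∑ v ∈ Finset.univ.erase i, residueCollisions r (shuffleCompl γ₁ γ₂ S v) (S v))
      (𝓝[≠] 0)
      (𝓝 (∏ v ∈ Finset.univ.erase i, leadingCrossProd r (shuffleCompl γ₁ γ₂ S v) (S v))) := by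
  simp only [interactionDenAway, map_prod, ← Finset.prod_pow_eq_pow_sum,
    ← Finset.prod_div_distrib]
  exact tendsto_finsetProd _ fun v _ => tendsto_crossProd_div r _ _ _ _

theorem tendsto_div_of_tendsto_div_pow {f g : ℝ → ℝ} {a b : ℝ} {p q : ℕ}
    (hf : Tendsto (fun ε => f ε / ε ^ p) (𝓝[≠] 0) (𝓝 a))
    (hg : Tendsto (fun ε => g ε / ε ^ q) (𝓝[≠] 0) (𝓝 b)) (hb : b ≠ 0) (hqp : q ≤ p) :
    Tendsto (fun ε => f ε / g ε) (𝓝[≠] 0) (𝓝 (0 ^ (p - q) * (a / b))) := by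
  have tendsto_pow : Tendsto (fun ε : ℝ => ε ^ (p - q)) (𝓝[≠] 0) (𝓝 (0 ^ (p - q))) :=
    ((continuous_pow _).tendsto 0).mono_left nhdsWithin_le_nhds
  refine (tendsto_pow.mul (hf.div hg hb)).congr' ?_
  filter_upwards [self_mem_nhdsWithin] with ε hε
  have hε' : ε ≠ 0 := hε
  rw [Pi.div_apply, pow_sub₀ _ hε' hqp]
  field_simp

end Degeneration

section ResidueShuffle

variable {β : Fin n → ℕ} {i : Fin n} {k l : ℕ} {S : Fin n → Finset ℕ}

theorem nsmul_apply_add_self (k : ℕ) (β : Fin n → ℕ) (v : Fin n) :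
    (k • β) v + β v = (k + 1) * β v := by
  rw [Pi.smul_apply, smul_eq_mul, add_one_mul]

/-- The shuffle in `shuffles (k • β) β` splitting off the indices congruent to `l` modulo `k + 1`:
the only one whose term survives the degeneration to `ε = 0`. -/
def residueShuffle (k l : ℕ) (β : Fin n → ℕ) (v : Fin n) : Finset ℕ :=
  (Finset.range ((k + 1) * β v)).filter fun j => j % (k + 1) ≠ l

theorem shuffleCompl_residueShuffle (k l : ℕ) (β : Fin n → ℕ) (v : Fin n) :
    shuffleCompl (k • β) β (residueShuffle k l β) v =
      (Finset.range ((k + 1) * β v)).filter fun j => j % (k + 1) = l := by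
  rw [shuffleCompl, nsmul_apply_add_self, residueShuffle, ← Finset.filter_not]
  simp only [not_not]

theorem residueShuffle_mem_shuffles (hl : l < k + 1) :
    residueShuffle k l β ∈ shuffles (k • β) β := by
  refine mem_shuffles.mpr fun v => ?_
  rw [nsmul_apply_add_self]
  refine ⟨Finset.filter_subset _ _, ?_⟩
  have card_add := Finset.card_filter_add_card_filter_not (s := Finset.range ((k + 1) * β v))
    fun j => j % (k + 1) = l
  have card_compl := residueCount_range_mul (β v) hl
  rw [residueCount] at card_compl
  rw [Finset.card_range, card_compl, ← nsmul_apply_add_self, add_comm] at card_add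
  rw [← Nat.add_right_cancel card_add, residueShuffle, nsmul_apply_add_self]

theorem residueShuffle_mem_shufflesAt (hi : β i = 1) (hl : l < k + 1) :
    residueShuffle k l β ∈ shufflesAt i (k • β) β ((Finset.range (k + 1)).erase l) := by
  refine mem_shufflesAt.mpr ⟨residueShuffle_mem_shuffles hl, ?_⟩
  rw [residueShuffle, hi, mul_one, ← Finset.filter_ne']
  exact Finset.filter_congr fun j hj => by rw [Nat.mod_eq_of_lt (Finset.mem_range.mp hj)]

theorem eq_residueShuffle (hl : l < k + 1) (hS : S ∈ shuffles (k • β) β)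
    (h : ∀ v, ∀ j ∈ shuffleCompl (k • β) β S v, j % (k + 1) = l) : S = residueShuffle k l β := by
  have hS₀ := residueShuffle_mem_shuffles (β := β) hl
  funext v
  have compl_subset :
      shuffleCompl (k • β) β S v ⊆ shuffleCompl (k • β) β (residueShuffle k l β) v := by
    intro j hj
    rw [shuffleCompl_residueShuffle, Finset.mem_filter, ← nsmul_apply_add_self]
    exact ⟨(Finset.mem_sdiff.mp hj).1, h v j hj⟩
  have compl_eq := Finset.eq_of_subset_of_card_le compl_subset
    (by rw [card_shuffleCompl hS, card_shuffleCompl hS₀])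
  rw [← Finset.sdiff_sdiff_eq_self (mem_shuffles.mp hS v).1,
    ← Finset.sdiff_sdiff_eq_self (mem_shuffles.mp hS₀ v).1]
  exact congrArg _ compl_eq

theorem residueCollisions_residueShuffle (k l : ℕ) (β : Fin n → ℕ) (v w : Fin n) :
    residueCollisions (k + 1) (shuffleCompl (k • β) β (residueShuffle k l β) v)
      (residueShuffle k l β w) = 0 := by
  refine Finset.sum_eq_zero fun j' hj' => Finset.sum_eq_zero fun j hj => if_neg ?_
  rw [shuffleCompl_residueShuffle, Finset.mem_filter] at hj'
  rw [hj'.2]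
  exact (Finset.mem_filter.mp hj).2.symm

theorem prod_leadingDifference_residueShuffle (k l : ℕ) (β : Fin n → ℕ) (w : Fin n) {j' : ℕ}
    (hj' : j' % (k + 1) = l) :
    ∏ j ∈ residueShuffle k l β w, leadingDifference (k + 1) j' j =
      (∏ b ∈ (Finset.range (k + 1)).erase l, ((l : ℝ) - b)) ^ β w := by
  have mod_mem : ∀ j ∈ residueShuffle k l β w, j % (k + 1) ∈ (Finset.range (k + 1)).erase l :=
    fun j hj => Finset.mem_erase.mpr
      ⟨(Finset.mem_filter.mp hj).2, Finset.mem_range.mpr (Nat.mod_lt j k.succ_pos)⟩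
  rw [← Finset.prod_pow, ← Finset.prod_fiberwise_of_maps_to mod_mem]
  refine Finset.prod_congr rfl fun b hb => ?_
  obtain ⟨b_ne, b_lt⟩ := Finset.mem_erase.mp hb
  have fiber_eq : (residueShuffle k l β w).filter (fun j => j % (k + 1) = b) =
      (Finset.range ((k + 1) * β w)).filter fun j => j % (k + 1) = b := by
    rw [residueShuffle, Finset.filter_filter]
    refine Finset.filter_congr fun j _ => and_iff_right_of_imp ?_
    rintro rfl
    exact b_ne
  rw [fiber_eq, Finset.prod_eq_pow_card (b := (l : ℝ) - b) fun j hj => ?_]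
  · exact congrArg _ (residueCount_range_mul (β w) (Finset.mem_range.mp b_lt))
  · have hjb := (Finset.mem_filter.mp hj).2
    rw [leadingDifference, hj', hjb, if_neg b_ne.symm]

theorem leadingCrossProd_residueShuffle (hl : l < k + 1) (v w : Fin n) :
    leadingCrossProd (k + 1) (shuffleCompl (k • β) β (residueShuffle k l β) v)
        (residueShuffle k l β w) =
      (∏ b ∈ (Finset.range (k + 1)).erase l, ((l : ℝ) - b)) ^ (β v * β w) := by
  rw [leadingCrossProd, Finset.prod_eq_pow_card fun j' hj' => ?_,
    card_shuffleCompl (residueShuffle_mem_shuffles hl), ← pow_mul, mul_comm]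
  rw [shuffleCompl_residueShuffle, Finset.mem_filter] at hj'
  exact prod_leadingDifference_residueShuffle k l β w hj'.2

end ResidueShuffle

section CollisionOrder

variable {Q : FinQuiver n} {β : Fin n → ℕ} {i : Fin n} {k l : ℕ} {S : Fin n → Finset ℕ}

theorem sum_euler_residueCount {r : ℕ} (hr : 0 < r) (A B : Fin n → Finset ℕ) :
    ∑ b ∈ Finset.range r,
        Q.euler (fun v => residueCount r (B v) b) (fun v => residueCount r (A v) b) =
      ∑ v, (residueCollisions r (A v) (B v) : ℤ) -
        ∑ a, (residueCollisions r (A (Q.hd a)) (B (Q.tl a)) : ℤ) := by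
  simp only [FinQuiver.euler, residueCollisions_eq_sum hr, Nat.cast_sum, Nat.cast_mul,
    Finset.sum_sub_distrib, mul_comm (residueCount r (A _) _ : ℤ)]
  rw [Finset.sum_comm, Finset.sum_comm (s := Finset.range r) (t := Finset.univ (α := Q.Arr))]

theorem residueCount_add_shuffleCompl (hS : S ∈ shuffles (k • β) β) {b : ℕ} (hb : b < k + 1) :
    ((fun v => residueCount (k + 1) (S v) b) +
      fun v => residueCount (k + 1) (shuffleCompl (k • β) β S v) b) = β := by
  funext v
  rw [Pi.add_apply, shuffleCompl, residueCount_add_sdiff (mem_shuffles.mp hS v).1,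
    nsmul_apply_add_self, residueCount_range_mul _ hb]

theorem sum_residueCount_shuffleCompl (hS : S ∈ shuffles (k • β) β) :
    ∑ b ∈ Finset.range (k + 1),
      (fun v => residueCount (k + 1) (shuffleCompl (k • β) β S v) b) = β := by
  funext v
  rw [Finset.sum_apply, sum_residueCount k.succ_pos, card_shuffleCompl hS]

theorem residueCount_ne_zero {r : ℕ} {A : Fin n → Finset ℕ} {v : Fin n} {j : ℕ} (hj : j ∈ A v) :
    (fun v => residueCount r (A v) (j % r)) ≠ 0 := fun h =>
  Finset.card_ne_zero_of_mem (s := (A v).filter fun j' => j' % r = j % r)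
    (Finset.mem_filter.mpr ⟨hj, rfl⟩) (congrFun h v)

theorem shuffleCompl_apply_of_eq_erase (hi : β i = 1) (hl : l < k + 1)
    (hSi : S i = (Finset.range (k + 1)).erase l) : shuffleCompl (k • β) β S i = {l} := by
  rw [shuffleCompl, nsmul_apply_add_self, hi, mul_one, hSi,
    Finset.sdiff_erase_self (Finset.mem_range.mpr hl)]

theorem FinQuiver.IsTitsPositiveRoot.sum_residueCollisions_lt (hβ : Q.IsTitsPositiveRoot β)
    (hi : β i = 1) (hl : l < k + 1)
    (hS : S ∈ shufflesAt i (k • β) β ((Finset.range (k + 1)).erase l))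
    (hne : S ≠ residueShuffle k l β) :
    ∑ v ∈ Finset.univ.erase i,
        residueCollisions (k + 1) (shuffleCompl (k • β) β S v) (S v) <
      ∑ a, residueCollisions (k + 1) (shuffleCompl (k • β) β S (Q.hd a)) (S (Q.tl a)) := by
  obtain ⟨hS, hSi⟩ := mem_shufflesAt.mp hS
  obtain ⟨v, j, hj, j_mod_ne⟩ : ∃ v, ∃ j ∈ shuffleCompl (k • β) β S v, j % (k + 1) ≠ l := by
    by_contra! h
    exact hne (eq_residueShuffle hl hS h)
  have l_mem : l ∈ shuffleCompl (k • β) β S i :=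
    shuffleCompl_apply_of_eq_erase hi hl hSi ▸ Finset.mem_singleton_self l
  have euler_neg := hβ.sum_euler_neg
    (fun b hb => residueCount_add_shuffleCompl hS (Finset.mem_range.mp hb))
    (sum_residueCount_shuffleCompl hS) (Finset.mem_range.mpr (Nat.mod_lt j k.succ_pos))
    (Finset.mem_range.mpr (Nat.mod_lt l k.succ_pos)) (by rwa [Nat.mod_eq_of_lt hl])
    (residueCount_ne_zero hj) (residueCount_ne_zero l_mem)
  rw [sum_euler_residueCount k.succ_pos] at euler_neg
  refine (Finset.sum_le_sum_of_subset (Finset.erase_subset _ _)).trans_lt ?_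
  zify
  linarith

end CollisionOrder

section LocalSumEqOne

open Filter Topology

variable {Q : FinQuiver n} {β : Fin n → ℕ} {i : Fin n} {k l : ℕ} {S : Fin n → Finset ℕ}

theorem tendsto_residueShuffle_term (hβ : Q.euler β β = 1) (hi : β i = 1) (hl : l < k + 1) :
    Tendsto (fun ε =>
      aeval (residuePoint (k + 1) ε) (interactionNum Q (k • β) β (residueShuffle k l β)) /
      aeval (residuePoint (k + 1) ε) (interactionDenAway i (k • β) β (residueShuffle k l β)))
      (𝓝[≠] 0) (𝓝 1) := by
  have num := tendsto_interactionNum_div Q (k • β) β (residueShuffle k l β) (k + 1)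
  have den := tendsto_interactionDenAway_div i (k • β) β (residueShuffle k l β) (k + 1)
  simp only [residueCollisions_residueShuffle, leadingCrossProd_residueShuffle hl,
    Finset.sum_const_zero, pow_zero, div_one, Finset.prod_pow_eq_pow_sum] at num den
  rw [sum_arrows_eq_sum_erase (i := i) (by simp [hβ, hi])] at num
  have ne_zero : ∏ b ∈ (Finset.range (k + 1)).erase l, ((l : ℝ) - b) ≠ 0 :=
    Finset.prod_ne_zero_iff.mpr fun b hb =>
      sub_ne_zero.mpr (Nat.cast_injective.ne (Finset.ne_of_mem_erase hb).symm)
  have tendsto_div := num.div den (pow_ne_zero _ ne_zero)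
  rwa [div_self (pow_ne_zero _ ne_zero)] at tendsto_div

theorem tendsto_term_of_ne_residueShuffle (hβ : Q.IsTitsPositiveRoot β) (hi : β i = 1)
    (hl : l < k + 1) (hS : S ∈ shufflesAt i (k • β) β ((Finset.range (k + 1)).erase l))
    (hne : S ≠ residueShuffle k l β) :
    Tendsto (fun ε => aeval (residuePoint (k + 1) ε) (interactionNum Q (k • β) β S) /
      aeval (residuePoint (k + 1) ε) (interactionDenAway i (k • β) β S)) (𝓝[≠] 0) (𝓝 0) := by
  have order_lt := hβ.sum_residueCollisions_lt hi hl hS hne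
  have tendsto_term := tendsto_div_of_tendsto_div_pow
    (tendsto_interactionNum_div Q (k • β) β S (k + 1))
    (tendsto_interactionDenAway_div i (k • β) β S (k + 1))
    (Finset.prod_ne_zero_iff.mpr fun v _ => leadingCrossProd_ne_zero _ Finset.sdiff_disjoint)
    order_lt.le
  rwa [zero_pow (Nat.sub_ne_zero_of_lt order_lt), zero_mul] at tendsto_term

theorem tendsto_localSum_residuePoint (hβ : Q.IsTitsPositiveRoot β) (hi : β i = 1)
    (hl : l < k + 1) :
    Tendsto (fun ε => localSum Q i (k • β) β ((Finset.range (k + 1)).erase l)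
      (residuePoint (k + 1) ε)) (𝓝[≠] 0) (𝓝 1) := by
  have hS₀ := residueShuffle_mem_shufflesAt hi hl
  simp only [localSum, ← Finset.add_sum_erase _ _ hS₀]
  have tendsto_others := tendsto_finsetSum _ fun S hS => tendsto_term_of_ne_residueShuffle hβ hi hl
    (Finset.mem_of_mem_erase hS) (Finset.ne_of_mem_erase hS)
  simpa using (tendsto_residueShuffle_term hβ.euler_self hi hl).add tendsto_others

theorem frequently_irrational_nhdsNE_zero : ∃ᶠ ε : ℝ in 𝓝[≠] 0, Irrational ε :=
  frequently_nhdsWithin_iff.mpr <|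
    (mem_closure_iff_frequently.mp (dense_irrational 0)).mono fun _ hε => ⟨hε, hε.ne_zero⟩

theorem localSum_eq_one (hβ : Q.IsTitsPositiveRoot β) (hi : β i = 1) (hl : l < k + 1)
    {K : Type} [Field K] [Algebra ℚ K] {x : Fin n × ℕ → K}
    (hx : ∀ v, Function.Injective fun j => x (v, j)) :
    localSum Q i (k • β) β ((Finset.range (k + 1)).erase l) x = 1 := by
  obtain ⟨c, hc⟩ := exists_localSum_eq_algebraMap (Q := Q) (i := i) (γ₁ := k • β) (γ₂ := β)
    (T := (Finset.range (k + 1)).erase l)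
    (by rw [FinQuiver.euler_nsmul_left, hβ.euler_self, Pi.smul_apply, hi, smul_eq_mul]; norm_num)
  have c_eq_one : algebraMap ℚ ℝ c = 1 :=
    tendsto_nhds_unique_of_frequently_eq tendsto_const_nhds
      (tendsto_localSum_residuePoint hβ hi hl)
      (frequently_irrational_nhdsNE_zero.mono fun ε hε =>
        (hc (residuePoint (k + 1) ε) fun v => residuePoint_injective _ hε v).symm)
  rw [hc x hx, (algebraMap ℚ ℝ).injective (c_eq_one.trans (map_one _).symm), map_one]

end LocalSumEqOne

section EraseRange

variable {k : ℕ} (l : Fin (k + 1))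

theorem succAbove_mem_erase_range (j : Fin k) :
    (l.succAbove j : ℕ) ∈ (Finset.range (k + 1)).erase (l : ℕ) :=
  Finset.mem_erase.mpr ⟨fun h => Fin.succAbove_ne l j (Fin.ext h),
    Finset.mem_range.mpr (l.succAbove j).2⟩

theorem card_erase_range : ((Finset.range (k + 1)).erase (l : ℕ)).card = k := by
  rw [Finset.card_erase_of_mem (Finset.mem_range.mpr l.2), Finset.card_range, Nat.add_sub_cancel]

theorem succAbove_eq_orderEmbOfFin :
    (fun j => (l.succAbove j : ℕ)) = Finset.orderEmbOfFin _ (card_erase_range l) :=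
  Finset.orderEmbOfFin_unique _ (succAbove_mem_erase_range l)
    fun _ _ hab => Fin.strictMono_succAbove l hab

theorem getD_sort_erase_range (j : Fin k) :
    (((Finset.range (k + 1)).erase (l : ℕ)).sort (· ≤ ·)).getD j 0 = l.succAbove j := by
  rw [congrFun (succAbove_eq_orderEmbOfFin l) j, Finset.orderEmbOfFin_apply,
    List.getD_eq_getElem]
  rfl

theorem prod_erase_range {M : Type*} [CommMonoid M] (g : ℕ → M) :
    ∏ j ∈ (Finset.range (k + 1)).erase (l : ℕ), g j = ∏ j : Fin k, g (l.succAbove j) := by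
  conv_lhs => rw [← Finset.map_orderEmbOfFin_univ _ (card_erase_range l), Finset.prod_map]
  exact Finset.prod_congr rfl fun j _ =>
    congrArg g (congrFun (succAbove_eq_orderEmbOfFin l) j).symm

end EraseRange

section CohaMul

variable {Q : FinQuiver n} {β : Fin n → ℕ} {i : Fin n} {k : ℕ} {S : Fin n → Finset ℕ}

theorem cohaMul_eq_of_algebraMap_eq {γ₁ γ₂ : Fin n → ℕ} {f₁ f₂ P : PolyQ n}
    (h : algebraMap (PolyQ n) (FractionRing (PolyQ n)) P = cohaMulRat Q γ₁ γ₂ f₁ f₂) :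
    cohaMul Q γ₁ γ₂ f₁ f₂ = P := by
  have hex : ∃ P, algebraMap (PolyQ n) (FractionRing (PolyQ n)) P = cohaMulRat Q γ₁ γ₂ f₁ f₂ :=
    ⟨P, h⟩
  rw [cohaMul, dif_pos hex]
  exact IsFractionRing.injective _ (FractionRing (PolyQ n)) (hex.choose_spec.trans h.symm)

theorem exists_apply_eq_erase_range (hi : β i = 1) (hS : S ∈ shuffles (k • β) β) :
    ∃ l : Fin (k + 1), S i = (Finset.range (k + 1)).erase (l : ℕ) := by
  have subset_range := (mem_shuffles.mp hS i).1
  obtain ⟨l, hl⟩ := Finset.card_eq_one.mp ((card_shuffleCompl hS i).trans hi)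
  have l_mem : l ∈ shuffleCompl (k • β) β S i := hl ▸ Finset.mem_singleton_self l
  rw [shuffleCompl] at hl l_mem
  rw [← Finset.sdiff_sdiff_eq_self subset_range, hl, Finset.sdiff_singleton_eq_erase]
  rw [nsmul_apply_add_self, hi, mul_one] at l_mem ⊢
  exact ⟨⟨l, Finset.mem_range.mp (Finset.mem_sdiff.mp l_mem).1⟩, rfl⟩

theorem erase_range_injective :
    Function.Injective fun l : Fin (k + 1) => (Finset.range (k + 1)).erase (l : ℕ) :=
  fun a b hab => Fin.ext <|
    Finset.erase_injOn _ (Finset.mem_range.mpr a.2) (Finset.mem_range.mpr b.2) hab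

theorem sum_shuffles_eq_sum_shufflesAt {M : Type*} [AddCommMonoid M] (hi : β i = 1)
    (F : (Fin n → Finset ℕ) → M) :
    ∑ S ∈ shuffles (k • β) β, F S = ∑ l : Fin (k + 1),
      ∑ S ∈ shufflesAt i (k • β) β ((Finset.range (k + 1)).erase (l : ℕ)), F S := by
  rw [← Finset.sum_fiberwise_of_maps_to (t := Finset.univ.image fun l : Fin (k + 1) =>
      (Finset.range (k + 1)).erase (l : ℕ)) (g := fun S => S i),
    Finset.sum_image erase_range_injective.injOn]
  · rfl
  · intro S hS
    obtain ⟨l, hl⟩ := exists_apply_eq_erase_range hi hS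
    exact Finset.mem_image.mpr ⟨l, Finset.mem_univ l, hl.symm⟩

/-- A polynomial in `m` variables, regarded as a polynomial in `ω_{i,0}, …, ω_{i,m-1}`. -/
noncomputable def vertexEmbedding (i : Fin n) (m : ℕ) : MvPolynomial (Fin m) ℚ →ₐ[ℚ] PolyQ n :=
  rename fun j : Fin m => (i, (j : ℕ))

theorem vertexEmbedding_injective (i : Fin n) (m : ℕ) :
    Function.Injective (vertexEmbedding i m) :=
  rename_injective _ ((Prod.mk_right_injective i).comp Fin.val_injective)

variable {K : Type} [Field K] [Algebra ℚ K] (x : Fin n × ℕ → K) (l : Fin (k + 1))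

theorem aeval_vertexEmbedding (m : ℕ) (g : MvPolynomial (Fin m) ℚ) :
    aeval x (vertexEmbedding i m g) = aeval (fun j : Fin m => x (i, j)) g := by
  rw [vertexEmbedding, aeval_rename]
  rfl

theorem aeval_substAlong (f : PolyQ n) :
    aeval x (substAlong S f) =
      aeval (fun p => x (p.1, ((S p.1).sort (· ≤ ·)).getD p.2 0)) f := by
  rw [substAlong, ← AlgHom.comp_apply, comp_aeval]
  simp only [aeval_X]

theorem aeval_substAlong_vertexEmbedding (hS : S i = (Finset.range (k + 1)).erase (l : ℕ))
    (g : MvPolynomial (Fin k) ℚ) :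
    aeval x (substAlong S (vertexEmbedding i k g)) =
      aeval ((fun j : Fin (k + 1) => x (i, j)) ∘ l.succAbove) g := by
  rw [aeval_substAlong, aeval_vertexEmbedding]
  simp only [hS, getD_sort_erase_range, Function.comp_def]

theorem aeval_substAlong_aeval_X {j : ℕ} (hS : S i = {j}) (f : Polynomial ℚ) :
    aeval x (substAlong S (Polynomial.aeval (X (i, 0)) f)) = Polynomial.aeval (x (i, j)) f := by
  rw [aeval_substAlong, ← Polynomial.aeval_algHom_apply, aeval_X, hS, Finset.sort_singleton,
    List.getD_cons_zero]

theorem aeval_interactionDen (hi : β i = 1)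
    (hS : S i = (Finset.range (k + 1)).erase (l : ℕ)) :
    aeval x (interactionDen (k • β) β S) =
      (∏ j, (x (i, l) - x (i, l.succAbove j))) * aeval x (interactionDenAway i (k • β) β S) := by
  rw [interactionDen_eq_crossProd_mul i, map_mul, shuffleCompl_apply_of_eq_erase hi l.2 hS,
    crossProd, Finset.prod_singleton, hS, prod_erase_range]
  simp only [map_prod, map_sub, aeval_X]

theorem sum_localization_terms (hβ : Q.IsTitsPositiveRoot β) (hi : β i = 1)
    (hx : ∀ v, Function.Injective fun j => x (v, j)) (g : MvPolynomial (Fin k) ℚ)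
    (f : Polynomial ℚ) :
    ∑ S ∈ shufflesAt i (k • β) β ((Finset.range (k + 1)).erase (l : ℕ)),
        aeval x (substAlong S (vertexEmbedding i k g) *
          substAlong (shuffleCompl (k • β) β S) (Polynomial.aeval (X (i, 0)) f) *
          interactionNum Q (k • β) β S) / aeval x (interactionDen (k • β) β S) =
      aeval ((fun j : Fin (k + 1) => x (i, j)) ∘ l.succAbove) g * Polynomial.aeval (x (i, l)) f /
        ∏ j, (x (i, l) - x (i, l.succAbove j)) := by
  rw [← mul_one (_ / _), ← localSum_eq_one hβ hi l.2 hx, localSum, Finset.mul_sum]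
  refine Finset.sum_congr rfl fun S hS => ?_
  have hSi := (mem_shufflesAt.mp hS).2
  rw [map_mul, map_mul, aeval_substAlong_vertexEmbedding x l hSi,
    aeval_substAlong_aeval_X x (shuffleCompl_apply_of_eq_erase hi l.2 hSi),
    aeval_interactionDen x l hi hSi, mul_div_mul_comm]

theorem cohaMul_vertexEmbedding_alternantQuotient (hβ : Q.IsTitsPositiveRoot β) (hi : β i = 1)
    (f : Fin (k + 1) → Polynomial ℚ) :
    cohaMul Q (k • β) β (vertexEmbedding i k (alternantQuotient (f ∘ Fin.castSucc)))
        (Polynomial.aeval (X (i, 0)) (f (Fin.last k))) =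
      vertexEmbedding i (k + 1) (alternantQuotient f) := by
  have vertex_injective (v : Fin n) : Function.Injective fun j => tautologicalPoint n (v, j) :=
    tautologicalPoint_injective.comp (Prod.mk_right_injective v)
  apply cohaMul_eq_of_algebraMap_eq
  simp only [cohaMulRat, ← aeval_tautologicalPoint]
  rw [aeval_vertexEmbedding, sum_shuffles_eq_sum_shufflesAt hi,
    ← sum_aeval_alternantQuotient_div (x := fun j : Fin (k + 1) => tautologicalPoint n (i, j)) f
      ((vertex_injective i).comp Fin.val_injective)]
  exact Finset.sum_congr rfl fun l _ =>
    (sum_localization_terms _ l hβ hi vertex_injective _ _).symm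

end CohaMul

section CohaProd

variable {Q : FinQuiver n} {β : Fin n → ℕ} {i : Fin n}

theorem cohaProd_concat {L : List ((Fin n → ℕ) × PolyQ n)} (hL : L ≠ [])
    (y : (Fin n → ℕ) × PolyQ n) :
    cohaProd Q (L.concat y) =
      ((cohaProd Q L).1 + y.1, cohaMul Q (cohaProd Q L).1 y.1 (cohaProd Q L).2 y.2) := by
  obtain ⟨x, xs, rfl⟩ := List.exists_cons_of_ne_nil hL
  simp [cohaProd]

theorem alternantQuotient_fin_zero (f : Fin 0 → Polynomial ℚ) : alternantQuotient f = 1 := by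
  simpa [alternant] using det_vandermonde_mul_alternantQuotient f

theorem alternantQuotient_fin_one (f : Fin 1 → Polynomial ℚ) :
    alternantQuotient f = Polynomial.aeval (X 0) (f 0) := by
  simpa [alternant] using det_vandermonde_mul_alternantQuotient f

theorem cohaProd_ofFn_eq (hβ : Q.IsTitsPositiveRoot β) (hi : β i = 1) (m : ℕ)
    (f : Fin m → Polynomial ℚ) :
    cohaProd Q (List.ofFn fun u => (β, Polynomial.aeval (X (i, 0)) (f u))) =
      (m • β, vertexEmbedding i m (alternantQuotient f)) := by
  induction m with
  | zero => simp [cohaProd, alternantQuotient_fin_zero, Pi.zero_def]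
  | succ k ih =>
    rcases eq_or_ne k 0 with rfl | hk
    · simp [cohaProd, alternantQuotient_fin_one, ← Polynomial.aeval_algHom_apply, vertexEmbedding]
    · rw [List.ofFn_succ', cohaProd_concat (by simpa using hk), ih fun u => f u.castSucc,
        succ_nsmul]
      exact Prod.ext rfl (cohaMul_vertexEmbedding_alternantQuotient hβ hi f)

end CohaProd

section Aspace

variable {β : Fin n → ℕ} {i : Fin n} {m : ℕ}

theorem exists_perm_fin_of_lt {σ : Equiv.Perm ℕ} (hσ : ∀ j, σ j ≠ j → j < m) :
    ∃ τ : Equiv.Perm (Fin m), ∀ j : Fin m, σ j = τ j := by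
  have apply_lt_iff (j : ℕ) : σ j < m ↔ j < m := by
    by_cases h : σ j = j
    · rw [h]
    · exact iff_of_true (hσ _ fun h' => h (σ.injective h')) (hσ j h)
  exact ⟨Fin.equivSubtype.symm.permCongr (σ.subtypePerm apply_lt_iff), fun _ => rfl⟩

theorem exists_perm_nat_extending (τ : Equiv.Perm (Fin m)) :
    ∃ σ : Equiv.Perm ℕ, (∀ j, σ j ≠ j → j < m) ∧ ∀ j : Fin m, σ j = τ j :=
  ⟨τ.extendDomain Fin.equivSubtype,
    fun _ hj => not_not.mp fun h => hj (τ.extendDomain_apply_not_subtype Fin.equivSubtype h),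
    τ.extendDomain_apply_image Fin.equivSubtype⟩

theorem rename_vertexPerm_vertexEmbedding {σ : Equiv.Perm ℕ} {τ : Equiv.Perm (Fin m)}
    (h : ∀ j : Fin m, σ j = τ j) (g : MvPolynomial (Fin m) ℚ) :
    rename (vertexPerm i σ) (vertexEmbedding i m g) = vertexEmbedding i m (rename τ g) := by
  simp only [vertexEmbedding, rename_rename, vertexPerm, Function.comp_def, if_true, h]

theorem rename_vertexPerm_vertexEmbedding_of_ne {v : Fin n} (hv : i ≠ v) (σ : Equiv.Perm ℕ)
    (g : MvPolynomial (Fin m) ℚ) :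
    rename (vertexPerm v σ) (vertexEmbedding i m g) = vertexEmbedding i m g := by
  simp only [vertexEmbedding, rename_rename, vertexPerm, Function.comp_def, if_neg hv]

theorem symmIn_vertexEmbedding {γ : Fin n → ℕ} (hγ : γ i = m) {g : MvPolynomial (Fin m) ℚ}
    (hg : g.IsSymmetric) : SymmIn γ (vertexEmbedding i m g) := by
  intro v σ hσ
  rcases eq_or_ne i v with rfl | hv
  · obtain ⟨τ, hτ⟩ := exists_perm_fin_of_lt (hγ ▸ hσ)
    rw [rename_vertexPerm_vertexEmbedding hτ, hg τ]
  · exact rename_vertexPerm_vertexEmbedding_of_ne hv σ g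

theorem isSymmetric_of_symmIn_vertexEmbedding {γ : Fin n → ℕ} (hγ : γ i = m)
    {g : MvPolynomial (Fin m) ℚ} (hg : SymmIn γ (vertexEmbedding i m g)) : g.IsSymmetric := by
  intro τ
  obtain ⟨σ, hσ, hστ⟩ := exists_perm_nat_extending τ
  apply vertexEmbedding_injective i m
  rw [← rename_vertexPerm_vertexEmbedding hστ]
  exact hg i σ (hγ.symm ▸ hσ)

theorem vertexEmbedding_mem_Aspace (hi : β i = 1) {g : MvPolynomial (Fin m) ℚ}
    (hg : g.IsSymmetric) : vertexEmbedding i m g ∈ Aspace β i m := by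
  have exists_of_mem_vars (p) (hp : p ∈ (vertexEmbedding i m g).vars) :
      ∃ j : Fin m, (i, (j : ℕ)) = p := by
    obtain ⟨j, -, hj⟩ := Finset.mem_image.mp (vars_rename _ g hp)
    exact ⟨j, hj⟩
  refine ⟨⟨fun p hp => ?_, symmIn_vertexEmbedding (by rw [hi, mul_one]) hg⟩, fun p hp => ?_⟩
  · obtain ⟨j, rfl⟩ := exists_of_mem_vars p hp
    simp [hi]
  · obtain ⟨j, rfl⟩ := exists_of_mem_vars p hp
    rfl

theorem exists_isSymmetric_vertexEmbedding_eq (hi : β i = 1) {p : PolyQ n}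
    (hp : p ∈ Aspace β i m) :
    ∃ g : MvPolynomial (Fin m) ℚ, g.IsSymmetric ∧ vertexEmbedding i m g = p := by
  obtain ⟨⟨vars_lt, symm⟩, vars_at⟩ := hp
  have vars_subset : (p.vars : Set (Fin n × ℕ)) ⊆ Set.range fun j : Fin m => (i, (j : ℕ)) := by
    rintro ⟨v, j⟩ hj
    obtain rfl : v = i := vars_at _ hj
    have j_lt : j < m * β v := vars_lt _ hj
    rw [hi, mul_one] at j_lt
    exact ⟨⟨j, j_lt⟩, rfl⟩
  obtain ⟨g, rfl⟩ := exists_rename_eq_of_vars_subset_range p _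
    ((Prod.mk_right_injective i).comp Fin.val_injective) vars_subset
  exact ⟨g, isSymmetric_of_symmIn_vertexEmbedding (by rw [hi, mul_one]) symm, rfl⟩

theorem map_vertexEmbedding_symmetricSubalgebra (hi : β i = 1) :
    (Subalgebra.toSubmodule (symmetricSubalgebra (Fin m) ℚ)).map
      (vertexEmbedding i m).toLinearMap = Aspace β i m := by
  apply le_antisymm
  · rintro _ ⟨g, hg, rfl⟩
    exact vertexEmbedding_mem_Aspace hi hg
  · intro p hp
    obtain ⟨g, hg, rfl⟩ := exists_isSymmetric_vertexEmbedding_eq hi hp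
    exact ⟨g, hg, rfl⟩

end Aspace

theorem span_products_eq_Aspace_general {Q : FinQuiver n} {β : Fin n → ℕ}
    (hβ : Q.IsTitsPositiveRoot β) {i : Fin n} (hi : β i = 1) (m : ℕ) :
    Submodule.span ℚ {g : PolyQ n | ∃ f : Fin m → Polynomial ℚ,
        g = cohaProdFin Q (fun _ => β)
          (fun u => Polynomial.aeval (X (i, 0) : PolyQ n) (f u))} =
      Aspace β i m := by
  have products_eq_image : {g : PolyQ n | ∃ f : Fin m → Polynomial ℚ,
        g = cohaProdFin Q (fun _ => β)
          (fun u => Polynomial.aeval (X (i, 0) : PolyQ n) (f u))} =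
      (vertexEmbedding i m).toLinearMap '' Set.range alternantQuotient := by
    ext g
    simp [cohaProdFin, cohaProd_ofFn_eq hβ hi, eq_comm]
  rw [products_eq_image, ← Submodule.map_span, span_range_alternantQuotient,
    map_vertexEmbedding_symmetricSubalgebra hi]

/-- Let `Q'` be a full connected Dynkin subquiver of the acyclic
quiver `Q`, `β` a positive root of `Q'`, and `i` a vertex with `β i = 1`.  For every
`m ≥ 0`, the `ℚ`-span of all `m`-fold left-to-right products
`(f₁(ω_{i,1}) ∈ ℋ_β) * ⋯ * (f_m(ω_{i,1}) ∈ ℋ_β)`, `f₁,…,f_m ∈ ℚ[x]`, equals the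
subspace `𝒜_{β,m}` of `ℋ_{m·β}` of polynomials depending only on
`ω_{i,1},…,ω_{i,m}`. -/
theorem span_products_eq_Aspace {n : ℕ} (Q : FinQuiver n) (hQ : Q.Acyclic)
    (Q' : Subquiver Q) (hD : Q'.IsDynkin)
    (β : Fin n → ℕ) (hβ : Q'.IsPosRoot β) (i : Fin n) (hi : β i = 1) (m : ℕ) :
    Submodule.span ℚ {g : PolyQ n | ∃ f : Fin m → Polynomial ℚ,
        g = cohaProdFin Q (fun _ => β)
          (fun u => Polynomial.aeval (X (i, 0) : PolyQ n) (f u))} =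
      Aspace β i m :=
  span_products_eq_Aspace_general (hβ.isTitsPositiveRoot hD.2.1 hD.2.2) hi m
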